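/- arXiv:2406.18383 — 6 statements merged into one kernel-verified Lean document; each statement's English description precedes it below -/
import Mathlib

section
/- For every real α with 0 ≤ α ≤ 1/2 there exists x ∈ B^ℕ such that γ̲(x) = γ̄(x) = β̲(x) = β̄(x) = α and h̲(x) = h̄(x) = H(α). -/
open Filter Topology

/-- The factor of length `len` of the sequence `x` starting at position `i`. -/
def factor (x : ℕ → Bool) (i len : ℕ) : List Bool :=
  List.ofFn (fun j : Fin len => x (i + j))

/-- Number of (possibly overlapping) occurrences of the word `u`
in the prefix `x[0:n)` of the sequence `x`. -/
def occ (x : ℕ → Bool) (n : ℕ) (u : List Bool) : ℕ :=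
  ((Finset.range (n + 1 - u.length)).filter (fun i => factor x i u.length = u)).card

/-- Non-aligned `ℓ`-block entropy of the prefix `x[0:n)`
(logs are base 2, with the convention `0 · log 0 = 0`). -/
noncomputable def hBlock (ℓ : ℕ) (x : ℕ → Bool) (n : ℕ) : ℝ :=
  -(1 / (ℓ : ℝ)) * ∑ u : Fin ℓ → Bool,
    ((occ x n (List.ofFn u) : ℝ) / ((n : ℝ) - ℓ + 1)) *
      Real.logb 2 ((occ x n (List.ofFn u) : ℝ) / ((n : ℝ) - ℓ + 1))

/-- `h̲(x) = lim_{ℓ→∞} liminf_{n→∞} h_ℓ(x[0:n))` (the limit in `ℓ` exists). -/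
noncomputable def hLow (x : ℕ → Bool) : ℝ :=
  atTop.liminf fun ℓ => atTop.liminf fun n => hBlock ℓ x n

/-- `h̄(x) = lim_{ℓ→∞} limsup_{n→∞} h_ℓ(x[0:n))` (the limit in `ℓ` exists). -/
noncomputable def hUp (x : ℕ → Bool) : ℝ :=
  atTop.limsup fun ℓ => atTop.limsup fun n => hBlock ℓ x n

/-- `γ_ℓ(x[0:n))`: normalized minimal number of prediction errors when predicting
`x[i]` from the preceding `ℓ` symbols `x[i-ℓ:i)`, for `i ∈ {ℓ,…,n-1}`. -/
noncomputable def gammaWord (ℓ : ℕ) (x : ℕ → Bool) (n : ℕ) : ℝ :=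
  (1 / ((n : ℝ) - ℓ)) *
    ((Finset.univ : Finset ((Fin ℓ → Bool) → Bool)).inf' Finset.univ_nonempty
      (fun f => ((((Finset.Ico ℓ n).filter
        (fun i => x i ≠ f (fun j => x (i - ℓ + j)))).card : ℝ))))

/-- `β_ℓ(x[0:n))`: normalized minimal number of prediction errors when predicting
`x[i]` from the following `ℓ` symbols `x[i+1:i+ℓ+1)`, for `i ∈ {0,…,n-ℓ-1}`. -/
noncomputable def betaWord (ℓ : ℕ) (x : ℕ → Bool) (n : ℕ) : ℝ :=
  (1 / ((n : ℝ) - ℓ)) *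
    ((Finset.univ : Finset ((Fin ℓ → Bool) → Bool)).inf' Finset.univ_nonempty
      (fun f => ((((Finset.range (n - ℓ)).filter
        (fun i => x i ≠ f (fun j => x (i + 1 + j)))).card : ℝ))))

/-- `γ̲(x) = lim_{ℓ→∞} liminf_{n→∞} γ_ℓ(x[0:n))` (the limit in `ℓ` exists, by monotonicity). -/
noncomputable def gammaLow (x : ℕ → Bool) : ℝ :=
  atTop.liminf fun ℓ => atTop.liminf fun n => gammaWord ℓ x n

/-- `γ̄(x) = lim_{ℓ→∞} limsup_{n→∞} γ_ℓ(x[0:n))` (the limit in `ℓ` exists, by monotonicity). -/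
noncomputable def gammaUp (x : ℕ → Bool) : ℝ :=
  atTop.limsup fun ℓ => atTop.limsup fun n => gammaWord ℓ x n

/-- `β̲(x) = lim_{ℓ→∞} liminf_{n→∞} β_ℓ(x[0:n))` (the limit in `ℓ` exists, by monotonicity). -/
noncomputable def betaLow (x : ℕ → Bool) : ℝ :=
  atTop.liminf fun ℓ => atTop.liminf fun n => betaWord ℓ x n

/-- `β̄(x) = lim_{ℓ→∞} limsup_{n→∞} β_ℓ(x[0:n))` (the limit in `ℓ` exists, by monotonicity). -/
noncomputable def betaUp (x : ℕ → Bool) : ℝ :=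
  atTop.limsup fun ℓ => atTop.limsup fun n => betaWord ℓ x n

/-- Binary Shannon entropy function `H(α) = -α log α - (1-α) log (1-α)` (base-2 logs). -/
noncomputable def binEntropy (a : ℝ) : ℝ :=
  -(a * Real.logb 2 a) - (1 - a) * Real.logb 2 (1 - a)

/-- Conditional block entropy `Hc^{n,ℓ}(x)`:
`-Σ_{ā ∈ B^ℓ, a ∈ B, p(ā·a) > 0} p(ā·a) · log (p(ā·a)/p(ā))`, where
`p(ā) = occ(x[0:n-1), ā)/(n-ℓ)` and `p(ā·a) = occ(x[0:n), ā·a)/(n-ℓ)`. -/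
noncomputable def condEntropy (ℓ : ℕ) (x : ℕ → Bool) (n : ℕ) : ℝ :=
  -∑ u : Fin ℓ → Bool, ∑ a : Bool,
    (if 0 < ((occ x n (List.ofFn u ++ [a]) : ℝ) / ((n : ℝ) - ℓ)) then
      ((occ x n (List.ofFn u ++ [a]) : ℝ) / ((n : ℝ) - ℓ)) *
        Real.logb 2 (((occ x n (List.ofFn u ++ [a]) : ℝ) / ((n : ℝ) - ℓ)) /
          ((occ x (n - 1) (List.ofFn u) : ℝ) / ((n : ℝ) - ℓ)))
    else 0)

/-- The real number in `[0,1]` denoted by the binary sequence `x`. -/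
noncomputable def val (x : ℕ → Bool) : ℝ :=
  ∑' n : ℕ, (if x n then (1 : ℝ) else 0) / 2 ^ (n + 1)

open MeasureTheory ProbabilityTheory

namespace Gen

/-- Averages along all residue classes converge, hence the averages converge. -/
lemma avg_of_residues (Y : ℕ → ℝ) (hY0 : ∀ i, 0 ≤ Y i) (hY1 : ∀ i, Y i ≤ 1) (m : ℕ) (hm : 0 < m)
    (p : ℝ)
    (h : ∀ r < m, Tendsto (fun k : ℕ => (∑ i ∈ Finset.range k, Y (r + i * m)) / (k : ℝ))
      atTop (𝓝 p)) :
    Tendsto (fun n : ℕ => (∑ i ∈ Finset.range n, Y i) / (n : ℝ)) atTop (𝓝 p) := by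
  have hsum : ∀ q : ℕ, ∑ i ∈ Finset.range (q * m), Y i
      = ∑ r ∈ Finset.range m, ∑ k ∈ Finset.range q, Y (r + k * m) := by
    intro q
    induction q with
    | zero => simp
    | succ q ih =>
      rw [Nat.succ_mul, Finset.sum_range_add, ih, ← Finset.sum_add_distrib]
      refine Finset.sum_congr rfl fun r _ => ?_
      rw [Finset.sum_range_succ, add_comm r]
  have hm' : (m : ℝ) ≠ 0 := by positivity
  have hmod := tendsto_mod_div_atTop_nhds_zero_nat hm
  have hq : Tendsto (fun n : ℕ => n / m) atTop atTop := Nat.tendsto_div_const_atTop hm.ne'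
  have hA : Tendsto (fun n : ℕ => ∑ r ∈ Finset.range m,
      (∑ i ∈ Finset.range (n / m), Y (r + i * m)) / ((n / m : ℕ) : ℝ)) atTop
      (𝓝 (∑ r ∈ Finset.range m, p)) := by
    refine tendsto_finsetSum _ fun r hr => ?_
    exact (h r (Finset.mem_range.1 hr)).comp hq
  have hqn : Tendsto (fun n : ℕ => ((n / m : ℕ) : ℝ) / n) atTop (𝓝 ((1 - 0) / m)) := by
    refine ((tendsto_const_nhds.sub hmod).div_const (m : ℝ)).congr' ?_
    filter_upwards [eventually_gt_atTop 0] with n hn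
    have hn' : (n : ℝ) ≠ 0 := by positivity
    have : (n : ℝ) = m * (n / m : ℕ) + (n % m : ℕ) := by exact_mod_cast (Nat.div_add_mod n m).symm
    field_simp
    linarith
  have hR : Tendsto (fun n : ℕ => (∑ i ∈ Finset.range (n % m), Y (n / m * m + i)) / (n : ℝ))
      atTop (𝓝 0) := by
    refine squeeze_zero (fun n => ?_) (fun n => ?_) hmod
    · exact div_nonneg (Finset.sum_nonneg fun i _ => hY0 _) (Nat.cast_nonneg _)
    · gcongr
      calc _ ≤ ∑ i ∈ Finset.range (n % m), (1 : ℝ) := Finset.sum_le_sum fun i _ => hY1 _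
        _ = _ := by simp
  have := (hA.mul hqn).add hR
  have e : (∑ r ∈ Finset.range m, p) * ((1 - 0) / m) + 0 = p := by
    simp; field_simp
  rw [e] at this
  refine this.congr' ?_
  filter_upwards [eventually_ge_atTop m] with n hn
  have hn' : (n : ℝ) ≠ 0 := by
    have : 0 < n := by omega
    positivity
  have hqp : ((n / m : ℕ) : ℝ) ≠ 0 := by
    have : 0 < n / m := Nat.div_pos hn hm
    positivity
  have hs : ∑ i ∈ Finset.range n, Y i = (∑ i ∈ Finset.range (n / m * m), Y i)
      + ∑ i ∈ Finset.range (n % m), Y (n / m * m + i) := by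
    conv_lhs => rw [← Nat.div_add_mod' n m]
    rw [Finset.sum_range_add]
  rw [hs, hsum, ← Finset.sum_div]
  field_simp

/-- Letter probabilities. -/
noncomputable def p (α : ℝ) (b : Bool) : ℝ := if b then α else 1 - α

/-- The Bernoulli measure. -/
noncomputable def nu (α : ℝ) : Measure Bool :=
  ENNReal.ofReal α • Measure.dirac true + ENNReal.ofReal (1 - α) • Measure.dirac false

lemma nu_prob (α : ℝ) (h0 : 0 ≤ α) (h1 : α ≤ 1) : IsProbabilityMeasure (nu α) := by
  constructor
  simp [nu]
  rw [← ENNReal.ofReal_add h0 (by linarith)]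
  simp

lemma nu_real (α : ℝ) (h0 : 0 ≤ α) (h1 : α ≤ 1) (b : Bool) : (nu α {b}).toReal = p α b := by
  cases b <;> simp [nu, p, h0, h1]

lemma ae_word (α : ℝ) (h0 : 0 ≤ α) (h1 : α ≤ 1) [IsProbabilityMeasure (nu α)]
    (m : ℕ) (hm : 0 < m) (u : Fin m → Bool) :
    ∀ᵐ x ∂(Measure.infinitePi (fun _ : ℕ => nu α)),
      Tendsto (fun n : ℕ => (∑ i ∈ Finset.range n,
        if (fun j : Fin m => x (i + j)) = u then (1 : ℝ) else 0) / (n : ℝ)) atTop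
        (𝓝 (∏ j, p α (u j))) := by
  set P := Measure.infinitePi (fun _ : ℕ => nu α) with hP
  let W : ℕ → (ℕ → Bool) → (Fin m → Bool) := fun a x j => x (a + j)
  let g : (Fin m → Bool) → ℝ := fun v => if v = u then 1 else 0
  have hg : Measurable g := measurable_of_finite g
  have hWm : ∀ a, Measurable (W a) := fun a => by fun_prop
  have hind : iIndepFun (fun (i : ℕ) (x : ℕ → Bool) => x i) P :=
    iIndepFun_infinitePi (X := fun _ b => b) (fun _ => measurable_id)
  have hlaw : ∀ a, P.map (W a) = Measure.pi (fun _ : Fin m => nu α) := by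
    intro a
    have h2 := hind.precomp (g := fun j : Fin m => a + (j : ℕ))
      (fun i j hij => by simpa [Fin.ext_iff] using hij)
    rw [iIndepFun_iff_map_fun_eq_pi_map (fun i => (measurable_pi_apply _).aemeasurable)] at h2
    refine h2.trans ?_
    congr 1
    funext j
    exact (measurePreserving_eval_infinitePi (fun _ : ℕ => nu α) (a + j)).map_eq
  have key : ∀ r < m, ∀ᵐ x ∂P, Tendsto (fun k : ℕ => (∑ i ∈ Finset.range k,
      g (W (r + i * m) x)) / (k : ℝ)) atTop (𝓝 (∏ j, p α (u j))) := by
    intro r _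
    have hint : ∫ x, g (W (r + 0 * m) x) ∂P = ∏ j, p α (u j) := by
      rw [← integral_map (hWm _).aemeasurable hg.aestronglyMeasurable, hlaw]
      have : g = Set.indicator {u} (fun _ => (1 : ℝ)) := by
        funext v; simp [g, Set.indicator_apply]
      rw [this, integral_indicator (measurableSet_singleton u)]
      simp [Measure.real, Measure.pi_singleton, ENNReal.toReal_prod, nu_real α h0 h1]
    rw [← hint]
    refine strong_law_ae_real (μ := P) (fun i x => g (W (r + i * m) x)) ?_ ?_ ?_
    · refine Integrable.of_bound (C := 1) (hg.comp (hWm _)).aestronglyMeasurable ?_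
      refine Eventually.of_forall fun x => ?_
      simp only [g]; split_ifs <;> simp
    · intro i i' hii
      let S : ℕ → Finset ℕ := fun i => Finset.Ico (r + i * m) (r + i * m + m)
      have hd : Disjoint (S i) (S i') := by
        rw [Finset.disjoint_left]
        intro a ha hb
        simp only [S, Finset.mem_Ico] at ha hb
        rcases lt_or_gt_of_ne hii with h | h
        · have := Nat.mul_le_mul_right m (Nat.succ_le_of_lt h)
          rw [Nat.succ_mul] at this; omega
        · have := Nat.mul_le_mul_right m (Nat.succ_le_of_lt h)
          rw [Nat.succ_mul] at this; omega
      have h3 := hind.indepFun_finset (S i) (S i') hd (fun i => by fun_prop)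
      let G : (i : ℕ) → ((S i) → Bool) → ℝ := fun i z =>
        g (fun j => z ⟨r + i * m + j, by simp [S]⟩)
      exact h3.comp (φ := G i) (ψ := G i') (measurable_of_finite _) (measurable_of_finite _)
    · intro i
      have : IdentDistrib (W (r + i * m)) (W (r + 0 * m)) P P :=
        ⟨(hWm _).aemeasurable, (hWm _).aemeasurable, by rw [hlaw, hlaw]⟩
      exact this.comp hg
  have key' : ∀ᵐ x ∂P, ∀ r, r < m → Tendsto (fun k : ℕ => (∑ i ∈ Finset.range k,
      g (W (r + i * m) x)) / (k : ℝ)) atTop (𝓝 (∏ j, p α (u j))) := by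
    rw [ae_all_iff]
    intro r
    by_cases hr : r < m
    · filter_upwards [key r hr] with x hx _ using hx
    · exact Eventually.of_forall fun x h => absurd h hr
  filter_upwards [key'] with x hx
  refine avg_of_residues (fun i => g (W i x)) ?_ ?_ m hm _ hx
  · intro i; simp only [g]; split_ifs <;> simp
  · intro i; simp only [g]; split_ifs <;> simp

lemma exists_generic (α : ℝ) (h0 : 0 ≤ α) (h1 : α ≤ 1) :
    ∃ x : ℕ → Bool, ∀ m : ℕ, 0 < m → ∀ u : Fin m → Bool,
      Tendsto (fun n : ℕ => (∑ i ∈ Finset.range n,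
        if (fun j : Fin m => x (i + j)) = u then (1 : ℝ) else 0) / (n : ℝ)) atTop
        (𝓝 (∏ j, p α (u j))) := by
  have := nu_prob α h0 h1
  have : ∀ᵐ x ∂(Measure.infinitePi (fun _ : ℕ => nu α)), ∀ m : ℕ, 0 < m → ∀ u : Fin m → Bool,
      Tendsto (fun n : ℕ => (∑ i ∈ Finset.range n,
        if (fun j : Fin m => x (i + j)) = u then (1 : ℝ) else 0) / (n : ℝ)) atTop
        (𝓝 (∏ j, p α (u j))) := by
    rw [ae_all_iff]
    intro m
    by_cases hm : 0 < m
    · have : ∀ᵐ x ∂(Measure.infinitePi (fun _ : ℕ => nu α)), ∀ u : Fin m → Bool,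
        Tendsto (fun n : ℕ => (∑ i ∈ Finset.range n,
          if (fun j : Fin m => x (i + j)) = u then (1 : ℝ) else 0) / (n : ℝ)) atTop
          (𝓝 (∏ j, p α (u j))) := by
        rw [ae_all_iff]
        exact fun u => ae_word α h0 h1 m hm u
      filter_upwards [this] with x hx _ using hx
    · exact Eventually.of_forall fun x h => absurd h hm
  exact this.exists

/-- Frequencies of arbitrary sets of words. -/
lemma tendsto_pred {α : ℝ} {x : ℕ → Bool}
    (hx : ∀ m : ℕ, 0 < m → ∀ u : Fin m → Bool,
      Tendsto (fun n : ℕ => (∑ i ∈ Finset.range n,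
        if (fun j : Fin m => x (i + j)) = u then (1 : ℝ) else 0) / (n : ℝ)) atTop
        (𝓝 (∏ j, p α (u j)))) (m : ℕ) (hm : 0 < m) (A : (Fin m → Bool) → Prop)
    [DecidablePred A] :
    Tendsto (fun n : ℕ => (((Finset.range n).filter
      (fun i => A (fun j : Fin m => x (i + j)))).card : ℝ) / (n : ℝ)) atTop
        (𝓝 (∑ v, if A v then ∏ j, p α (v j) else 0)) := by
  have h := tendsto_finsetSum (Finset.univ.filter A) (fun u _ => hx m hm u)
  rw [Finset.sum_filter] at h
  refine h.congr fun n => ?_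
  rw [← Finset.sum_div, Finset.sum_comm, Finset.card_filter]
  push_cast
  congr 1
  refine Finset.sum_congr rfl fun i _ => ?_
  rw [Finset.sum_ite_eq]
  simp

lemma sum_prod (α : ℝ) (m : ℕ) : ∑ v : Fin m → Bool, ∏ j, p α (v j) = 1 := by
  rw [← Fintype.sum_pow]
  simp [p]

lemma sum_entropy (α : ℝ) (m : ℕ) :
    ∑ v : Fin m → Bool, Real.negMulLog (∏ j, p α (v j))
      = m * (Real.negMulLog α + Real.negMulLog (1 - α)) := by
  induction m with
  | zero => simp
  | succ m ih =>
    rw [← (Fin.consEquiv (fun _ => Bool)).sum_comp, Fintype.sum_prod_type]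
    simp only [Fin.consEquiv_apply, Fin.prod_univ_succ, Fin.cons_zero, Fin.cons_succ,
      Real.negMulLog_mul, Finset.sum_add_distrib, ← Finset.sum_mul, ← Finset.mul_sum, ih,
      sum_prod]
    simp [p]
    ring

lemma scale_inf' {ι : Type*} (s : Finset ι) (hs : s.Nonempty) (f : ι → ℝ) (c : ℝ) (hc : 0 ≤ c) :
    c * s.inf' hs f = s.inf' hs (fun i => c * f i) := by
  apply le_antisymm
  · exact Finset.le_inf' _ _ fun i hi => mul_le_mul_of_nonneg_left (Finset.inf'_le _ hi) hc
  · obtain ⟨i, hi, h⟩ := Finset.exists_mem_eq_inf' hs f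
    rw [h]
    exact Finset.inf'_le (fun i => c * f i) hi

lemma inf_value (α : ℝ) (h0 : 0 ≤ α) (h1 : α ≤ 1 / 2) (m : ℕ) :
    (Finset.univ : Finset ((Fin m → Bool) → Bool)).inf' Finset.univ_nonempty
      (fun f => ∑ b : Bool, ∑ w : Fin m → Bool,
        if b ≠ f w then p α b * ∏ j, p α (w j) else 0) = α := by
  have hp : ∀ b, α ≤ p α b := by intro b; cases b <;> simp [p]; linarith
  have hM : ∀ w : Fin m → Bool, 0 ≤ ∏ j, p α (w j) :=
    fun w => Finset.prod_nonneg fun j _ => h0.trans (hp _)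
  apply le_antisymm
  · refine (Finset.inf'_le _ (Finset.mem_univ (fun _ => false))).trans (le_of_eq ?_)
    simp [← Finset.mul_sum, sum_prod]
    simp [p]
  · refine Finset.le_inf' _ _ fun f _ => ?_
    rw [Finset.sum_comm]
    calc α = ∑ w : Fin m → Bool, α * ∏ j, p α (w j) := by rw [← Finset.mul_sum, sum_prod, mul_one]
      _ ≤ _ := Finset.sum_le_sum fun w _ => ?_
    cases hf : f w
    · simpa using mul_le_mul_of_nonneg_right (hp true) (hM w)
    · simpa using mul_le_mul_of_nonneg_right (hp false) (hM w)

/-- Genericity for the Bernoulli measure with parameter `α`. -/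
def Generic (α : ℝ) (x : ℕ → Bool) : Prop :=
  ∀ m : ℕ, 0 < m → ∀ u : Fin m → Bool,
      Tendsto (fun n : ℕ => (∑ i ∈ Finset.range n,
        if (fun j : Fin m => x (i + j)) = u then (1 : ℝ) else 0) / (n : ℝ)) atTop
        (𝓝 (∏ j, p α (u j)))

lemma gamma_tendsto {α : ℝ} {x : ℕ → Bool} (hx : Generic α x) (h0 : 0 ≤ α) (h1 : α ≤ 1 / 2)
    (ℓ : ℕ) : Tendsto (fun n => gammaWord ℓ x n) atTop (𝓝 α) := by
  have key : ∀ f ∈ (Finset.univ : Finset ((Fin ℓ → Bool) → Bool)),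
      Tendsto (fun n : ℕ => (1 / ((n : ℝ) - ℓ)) * ((((Finset.Ico ℓ n).filter
        (fun i => x i ≠ f (fun j => x (i - ℓ + j)))).card : ℝ))) atTop
        (𝓝 (∑ b : Bool, ∑ w : Fin ℓ → Bool,
        if b ≠ f w then p α b * ∏ j, p α (w j) else 0)) := by
    intro f _
    have h := (tendsto_pred hx (ℓ + 1) (Nat.succ_pos _)
      (fun v => v (Fin.last ℓ) ≠ f (fun j => v j.castSucc))).comp (tendsto_sub_atTop_nat ℓ)
    rw [← (Fin.snocEquiv (fun _ => Bool)).sum_comp, Fintype.sum_prod_type] at h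
    simp only [Fin.snocEquiv_apply, Fin.prod_univ_castSucc, Fin.snoc_last, Fin.snoc_castSucc] at h
    simp only [mul_comm (p α _)]
    refine h.congr' ?_
    filter_upwards [eventually_ge_atTop ℓ] with n hn
    simp only [Function.comp_apply, Fin.val_last, Fin.val_castSucc]
    rw [Nat.cast_sub hn, one_div, mul_comm, div_eq_mul_inv]
    congr 2
    refine Finset.card_bij (fun i _ => i + ℓ) ?_ ?_ ?_
    · intro i hi
      simp only [Finset.mem_filter, Finset.mem_range, Finset.mem_Ico] at hi ⊢
      refine ⟨by omega, ?_⟩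
      simpa using hi.2
    · intro i _ j _ h; omega
    · intro i hi
      simp only [Finset.mem_filter, Finset.mem_Ico] at hi
      refine ⟨i - ℓ, ?_, by omega⟩
      simp only [Finset.mem_filter, Finset.mem_range]
      refine ⟨by omega, ?_⟩
      rw [Nat.sub_add_cancel hi.1.1]
      exact hi.2
  have h := Filter.Tendsto.finset_inf'_nhds_apply Finset.univ_nonempty key
  rw [inf_value α h0 h1] at h
  refine h.congr' ?_
  filter_upwards [eventually_ge_atTop ℓ] with n hn
  rw [gammaWord, scale_inf']
  have : (ℓ : ℝ) ≤ n := by exact_mod_cast hn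
  exact one_div_nonneg.2 (by linarith)

lemma beta_tendsto {α : ℝ} {x : ℕ → Bool} (hx : Generic α x) (h0 : 0 ≤ α) (h1 : α ≤ 1 / 2)
    (ℓ : ℕ) : Tendsto (fun n => betaWord ℓ x n) atTop (𝓝 α) := by
  have key : ∀ f ∈ (Finset.univ : Finset ((Fin ℓ → Bool) → Bool)),
      Tendsto (fun n : ℕ => (1 / ((n : ℝ) - ℓ)) * ((((Finset.range (n - ℓ)).filter
        (fun i => x i ≠ f (fun j => x (i + 1 + j)))).card : ℝ))) atTop
        (𝓝 (∑ b : Bool, ∑ w : Fin ℓ → Bool,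
        if b ≠ f w then p α b * ∏ j, p α (w j) else 0)) := by
    intro f _
    have h := (tendsto_pred hx (ℓ + 1) (Nat.succ_pos _)
      (fun v => v 0 ≠ f (fun j => v j.succ))).comp (tendsto_sub_atTop_nat ℓ)
    rw [← (Fin.consEquiv (fun _ => Bool)).sum_comp, Fintype.sum_prod_type] at h
    simp only [Fin.consEquiv_apply, Fin.prod_univ_succ, Fin.cons_zero, Fin.cons_succ] at h
    refine h.congr' ?_
    filter_upwards [eventually_ge_atTop ℓ] with n hn
    simp only [Function.comp_apply, Fin.val_zero, Fin.val_succ]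
    rw [Nat.cast_sub hn, one_div, mul_comm, div_eq_mul_inv]
    simp only [add_zero, add_assoc, add_comm 1]
  have h := Filter.Tendsto.finset_inf'_nhds_apply Finset.univ_nonempty key
  rw [inf_value α h0 h1] at h
  refine h.congr' ?_
  filter_upwards [eventually_ge_atTop ℓ] with n hn
  rw [betaWord, scale_inf']
  have : (ℓ : ℝ) ≤ n := by exact_mod_cast hn
  exact one_div_nonneg.2 (by linarith)

lemma h_tendsto {α : ℝ} {x : ℕ → Bool} (hx : Generic α x) (ℓ : ℕ) (hl : 0 < ℓ) :
    Tendsto (fun n => hBlock ℓ x n) atTop (𝓝 (binEntropy α)) := by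
  have key : ∀ u : Fin ℓ → Bool,
      Tendsto (fun n : ℕ => (occ x n (List.ofFn u) : ℝ) / ((n : ℝ) - ℓ + 1)) atTop
        (𝓝 (∏ j, p α (u j))) := by
    intro u
    have h := (tendsto_pred hx ℓ hl (fun v => v = u)).comp (tendsto_sub_atTop_nat (ℓ - 1))
    rw [Finset.sum_ite_eq'] at h
    simp only [Finset.mem_univ, if_true] at h
    refine h.congr' ?_
    filter_upwards [eventually_ge_atTop ℓ] with n hn
    have e : n + 1 - ℓ = n - (ℓ - 1) := by omega
    have e2 : ((n - (ℓ - 1) : ℕ) : ℝ) = (n : ℝ) - ℓ + 1 := by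
      rw [← e, Nat.cast_sub (by omega)]; push_cast; ring
    simp only [Function.comp_apply, e2, occ, factor, List.length_ofFn, e]
    congr 3
    refine Finset.filter_congr fun i _ => ?_
    rw [List.ofFn_inj']
    simp [Sigma.ext_iff]
  have h := (tendsto_finsetSum Finset.univ
    (fun u _ => (Real.continuous_negMulLog.tendsto _).comp (key u))).const_mul
      (1 / ((ℓ : ℝ) * Real.log 2))
  rw [sum_entropy] at h
  have hl' : (ℓ : ℝ) ≠ 0 := by positivity
  have hlog : Real.log 2 ≠ 0 := (Real.log_pos (by norm_num)).ne'
  have e : 1 / ((ℓ : ℝ) * Real.log 2) * (ℓ * (Real.negMulLog α + Real.negMulLog (1 - α)))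
      = binEntropy α := by
    simp only [binEntropy, Real.negMulLog, Real.logb]
    field_simp
    ring
  rw [e] at h
  refine h.congr fun n => ?_
  rw [hBlock, Finset.mul_sum, Finset.mul_sum]
  refine Finset.sum_congr rfl fun u _ => ?_
  simp only [Function.comp_apply, Real.negMulLog, Real.logb]
  field_simp

lemma lims {F : ℕ → ℕ → ℝ} {a : ℝ} (h : ∀ ℓ, 0 < ℓ → Tendsto (F ℓ) atTop (𝓝 a)) :
    (atTop.liminf fun ℓ => atTop.liminf fun n => F ℓ n) = a ∧
    (atTop.limsup fun ℓ => atTop.limsup fun n => F ℓ n) = a := by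
  constructor
  · refine Tendsto.liminf_eq (tendsto_const_nhds.congr' ?_)
    filter_upwards [eventually_gt_atTop 0] with ℓ hl using (h ℓ hl).liminf_eq.symm
  · refine Tendsto.limsup_eq (tendsto_const_nhds.congr' ?_)
    filter_upwards [eventually_gt_atTop 0] with ℓ hl using (h ℓ hl).limsup_eq.symm

end Gen

theorem exists_seq_entropy_eq_binEntropy (α : ℝ) (h0 : 0 ≤ α) (h1 : α ≤ 1 / 2) :
    ∃ x : ℕ → Bool,
      gammaLow x = α ∧ gammaUp x = α ∧ betaLow x = α ∧ betaUp x = α ∧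
      hLow x = binEntropy α ∧ hUp x = binEntropy α := by
  obtain ⟨x, hx⟩ := Gen.exists_generic α h0 (by linarith)
  have hg := Gen.lims fun ℓ _ => Gen.gamma_tendsto hx h0 h1 ℓ
  have hb := Gen.lims fun ℓ _ => Gen.beta_tendsto hx h0 h1 ℓ
  have hh := Gen.lims fun ℓ hl => Gen.h_tendsto hx ℓ hl
  exact ⟨x, hg.1, hg.2, hb.1, hb.2, hh.1, hh.2⟩
end

section
/- For every real α with 0 ≤ α ≤ 1/2 and every ε > 0 there exists x ∈ B^ℕ such that γ̲(x) = γ̄(x) = β̲(x) = β̄(x) = α and h̲(x) = h̄(x) ≤ 2α + ε. -/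
open Filter Topology

namespace Constr

/-- Periodic word of stage `k`. -/
noncomputable def zz (c : ℝ) (k i : ℕ) : Bool :=
  if (i / k / 2 ^ k) % k < ⌊c * k⌋₊ then (i / k).testBit (i % k) else false

/-- The sequence. -/
noncomputable def xx (c : ℝ) (i : ℕ) : Bool := zz c (Nat.log 4 i) i

open Classical in
/-- Indicator of an occurrence of `u` at position `i`. -/
noncomputable def ind (y : ℕ → Bool) {ℓ : ℕ} (u : Fin ℓ → Bool) (i : ℕ) : ℝ :=
  if ∀ j : Fin ℓ, y (i + j) = u j then 1 else 0

open Classical in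
/-- Indicator of the zero word. -/
noncomputable def zo {ℓ : ℕ} (u : Fin ℓ → Bool) : ℝ :=
  if ∀ j : Fin ℓ, u j = false then 1 else 0

/-- Limit frequencies. -/
noncomputable def mu (c : ℝ) {ℓ : ℕ} (u : Fin ℓ → Bool) : ℝ :=
  c * (1 / 2 ^ ℓ) + (1 - c) * zo u

lemma ind_mem (y : ℕ → Bool) {ℓ : ℕ} (u : Fin ℓ → Bool) (i : ℕ) : 0 ≤ ind y u i ∧ ind y u i ≤ 1 := by
  unfold ind; split_ifs <;> norm_num

lemma zo_mem {ℓ : ℕ} (u : Fin ℓ → Bool) : 0 ≤ zo u ∧ zo u ≤ 1 := by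
  unfold zo; split_ifs <;> norm_num

lemma p_mem (ℓ : ℕ) : (0:ℝ) ≤ 1 / 2 ^ ℓ ∧ (1:ℝ) / 2 ^ ℓ ≤ 1 := by
  refine ⟨by positivity, ?_⟩
  rw [div_le_one (by positivity)]
  exact one_le_pow₀ (by norm_num)

lemma mu_mem {c : ℝ} (h0 : 0 ≤ c) (h1 : c ≤ 1) {ℓ : ℕ} (u : Fin ℓ → Bool) :
    0 ≤ mu c u ∧ mu c u ≤ 1 := by
  have h2 := zo_mem u
  have h3 := p_mem ℓ
  unfold mu
  constructor
  · have : 0 ≤ 1 - c := by linarith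
    have := h2.1; have := h3.1
    positivity
  · nlinarith

lemma d_abs {c : ℝ} (h0 : 0 ≤ c) (h1 : c ≤ 1) (y : ℕ → Bool) {ℓ : ℕ} (u : Fin ℓ → Bool) (i : ℕ) :
    |ind y u i - mu c u| ≤ 1 := by
  have := ind_mem y u i
  have := mu_mem h0 h1 u
  rw [abs_le]; constructor <;> linarith

lemma sum_mul (f : ℕ → ℝ) (a b : ℕ) :
    ∑ i ∈ Finset.range (a * b), f i
      = ∑ j ∈ Finset.range a, ∑ r ∈ Finset.range b, f (j * b + r) := by
  induction a with
  | zero => simp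
  | succ a ih => rw [Nat.succ_mul, Finset.sum_range_add, ih, Finset.sum_range_succ]

lemma zz_eval (c : ℝ) {k s q t : ℕ} (ht : t < k) (hq : q < 2 ^ k) :
    zz c k ((s * 2 ^ k + q) * k + t) = if s % k < ⌊c * k⌋₊ then q.testBit t else false := by
  have e1 : ((s * 2 ^ k + q) * k + t) / k = s * 2 ^ k + q := by
    rw [mul_comm, Nat.mul_add_div (by omega), Nat.div_eq_of_lt ht, add_zero]
  have e2 : ((s * 2 ^ k + q) * k + t) % k = t := by
    rw [mul_comm, Nat.mul_add_mod, Nat.mod_eq_of_lt ht]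
  have e3 : (s * 2 ^ k + q) / 2 ^ k = s := by
    rw [mul_comm, Nat.mul_add_div (by positivity), Nat.div_eq_of_lt hq, add_zero]
  unfold zz
  rw [e1, e2, e3, mul_comm s, Nat.testBit_two_pow_mul_add _ hq, if_pos ht]

open Classical in
lemma count_bits {k ℓ r : ℕ} (h : r + ℓ ≤ k) (u : Fin ℓ → Bool) :
    ∑ q ∈ Finset.range (2 ^ k), (if ∀ j : Fin ℓ, q.testBit (r + j) = u j then (1:ℝ) else 0)
      = 2 ^ k * (1 / 2 ^ ℓ) := by
  obtain ⟨m, rfl⟩ := Nat.exists_eq_add_of_le h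
  have e : 2 ^ (r + ℓ + m) = 2 ^ m * (2 ^ ℓ * 2 ^ r) := by ring
  have hU : Nat.ofBits u < 2 ^ ℓ := Nat.ofBits_lt_two_pow u
  have key : ∀ g t w, t < 2 ^ ℓ → w < 2 ^ r →
      ((∀ j : Fin ℓ, (g * (2 ^ ℓ * 2 ^ r) + (t * 2 ^ r + w)).testBit (r + j) = u j)
        ↔ t = Nat.ofBits u) := by
    intro g t w ht hw
    have e1 : g * (2 ^ ℓ * 2 ^ r) + (t * 2 ^ r + w) = 2 ^ r * (2 ^ ℓ * g + t) + w := by ring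
    have e2 : ∀ j : Fin ℓ, (g * (2 ^ ℓ * 2 ^ r) + (t * 2 ^ r + w)).testBit (r + j) = t.testBit j := by
      intro j
      rw [e1, Nat.testBit_two_pow_mul_add _ hw, if_neg (by omega), Nat.add_sub_cancel_left,
        Nat.testBit_two_pow_mul_add _ ht, if_pos j.2]
    simp only [e2]
    constructor
    · intro hh
      apply Nat.eq_of_testBit_eq
      intro i
      by_cases hi : i < ℓ
      · rw [hh ⟨i, hi⟩, Nat.testBit_ofBits_lt _ _ hi]
      · rw [Nat.testBit_lt_two_pow, Nat.testBit_lt_two_pow]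
        · exact hU.trans_le (Nat.pow_le_pow_right (by norm_num) (by omega))
        · exact ht.trans_le (Nat.pow_le_pow_right (by norm_num) (by omega))
    · rintro rfl j
      rw [Nat.testBit_ofBits_lt _ _ j.2]
  rw [e, sum_mul]
  have : ∀ g ∈ Finset.range (2 ^ m), ∑ q ∈ Finset.range (2 ^ ℓ * 2 ^ r),
      (if ∀ j : Fin ℓ, (g * (2 ^ ℓ * 2 ^ r) + q).testBit (r + j) = u j then (1:ℝ) else 0) = 2 ^ r := by
    intro g _
    rw [sum_mul]
    have : ∀ t ∈ Finset.range (2 ^ ℓ), ∑ w ∈ Finset.range (2 ^ r),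
      (if ∀ j : Fin ℓ, (g * (2 ^ ℓ * 2 ^ r) + (t * 2 ^ r + w)).testBit (r + j) = u j
        then (1:ℝ) else 0) = if t = Nat.ofBits u then 2 ^ r else 0 := by
      intro t ht
      rw [Finset.sum_congr rfl (g := fun w => if t = Nat.ofBits u then (1:ℝ) else 0)]
      · split_ifs <;> simp
      · intro w hw
        simp only [key g t w (Finset.mem_range.1 ht) (Finset.mem_range.1 hw)]
    rw [Finset.sum_congr rfl this, Finset.sum_ite_eq' , if_pos (Finset.mem_range.2 hU)]
  rw [Finset.sum_congr rfl this]
  simp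
  rw [pow_add, pow_add]
  field_simp

lemma row_sum {c : ℝ} {k ℓ r s : ℕ} (h : r + ℓ ≤ k) (u : Fin ℓ → Bool) :
    ∑ q ∈ Finset.range (2 ^ k), ind (zz c k) u ((s * 2 ^ k + q) * k + r)
      = 2 ^ k * (if s % k < ⌊c * k⌋₊ then (1 / 2 ^ ℓ) else zo u) := by
  have ev : ∀ q ∈ Finset.range (2 ^ k), ∀ j : Fin ℓ, zz c k ((s * 2 ^ k + q) * k + r + j)
      = if s % k < ⌊c * k⌋₊ then q.testBit (r + j) else false := by
    intro q hq j
    rw [add_assoc, zz_eval c (by omega) (Finset.mem_range.1 hq)]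
  split_ifs with hs
  · rw [← count_bits h u]
    apply Finset.sum_congr rfl
    intro q hq
    unfold ind
    simp only [ev q hq, if_pos hs]
  · rw [Finset.sum_congr rfl (g := fun _ => zo u)]
    · simp
    · intro q hq
      unfold ind zo
      simp only [ev q hq, if_neg hs, eq_comm]

lemma col_sum {c : ℝ} (h0 : 0 ≤ c) (h1 : c ≤ 1) {k ℓ r m : ℕ} (h : r + ℓ ≤ k) 
    (u : Fin ℓ → Bool) :
    |∑ s ∈ Finset.range (m * k), ∑ q ∈ Finset.range (2 ^ k),
      (ind (zz c k) u ((s * 2 ^ k + q) * k + r) - mu c u)| ≤ m * 2 ^ k := by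
  set a := ⌊c * k⌋₊ with ha
  have hck : 0 ≤ c * k := by positivity
  have ha1 : (a : ℝ) ≤ c * k := Nat.floor_le hck
  have ha2 : c * k < a + 1 := Nat.lt_floor_add_one _
  have hak : a ≤ k := by
    have : (a : ℝ) ≤ k := ha1.trans (by nlinarith [(Nat.cast_nonneg k : (0:ℝ) ≤ k)])
    exact_mod_cast this
  have step : ∀ s ∈ Finset.range (m * k), ∑ q ∈ Finset.range (2 ^ k),
      (ind (zz c k) u ((s * 2 ^ k + q) * k + r) - mu c u)
      = 2 ^ k * ((if s % k < a then (1 / 2 ^ ℓ) else zo u) - mu c u) := by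
    intro s _
    rw [Finset.sum_sub_distrib, row_sum h u]
    simp only [Finset.sum_const, Finset.card_range, nsmul_eq_mul]
    push_cast
    rw [mul_sub]
  rw [Finset.sum_congr rfl step, sum_mul]
  have step2 : ∀ g ∈ Finset.range m, ∑ t ∈ Finset.range k,
      (2:ℝ) ^ k * ((if (g * k + t) % k < a then (1 / 2 ^ ℓ) else zo u) - mu c u)
      = 2 ^ k * ((a - c * k) * (1 / 2 ^ ℓ - zo u)) := by
    intro g _
    rw [← Finset.mul_sum, Finset.sum_sub_distrib]
    congr 1
    rw [Finset.sum_congr rfl (g := fun t => (if t < a then (1 / 2 ^ ℓ : ℝ) else zo u))]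
    · obtain ⟨b, hb⟩ := Nat.exists_eq_add_of_le hak
      have : (k : ℝ) = a + b := by exact_mod_cast hb
      have hs : ∑ t ∈ Finset.range k, (if t < a then (1 / 2 ^ ℓ : ℝ) else zo u)
          = a * (1 / 2 ^ ℓ) + b * zo u := by
        rw [hb, Finset.sum_range_add]
        congr 1
        · rw [Finset.sum_congr rfl (g := fun _ => (1 / 2 ^ ℓ : ℝ))]
          · simp
          · intro t ht; rw [if_pos (Finset.mem_range.1 ht)]
        · simp
      rw [hs]
      simp only [Finset.sum_const, Finset.card_range, nsmul_eq_mul, this, mu]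
      ring
    · intro t ht
      rw [mul_comm g k, Nat.mul_add_mod, Nat.mod_eq_of_lt (Finset.mem_range.1 ht)]
  rw [Finset.sum_congr rfl step2]
  simp only [Finset.sum_const, Finset.card_range, nsmul_eq_mul]
  rw [abs_mul, abs_mul, abs_mul]
  have b1 : |(a:ℝ) - c * k| ≤ 1 := by rw [abs_le]; constructor <;> linarith
  have b2 : |(1:ℝ) / 2 ^ ℓ - zo u| ≤ 1 := by
    have := zo_mem u
    have := p_mem ℓ
    rw [abs_le]; constructor <;> linarith
  have b3 : |(a:ℝ) - c * k| * |(1:ℝ) / 2 ^ ℓ - zo u| ≤ 1 := by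
    have := mul_le_mul b1 b2 (abs_nonneg _) (by norm_num); linarith
  rw [abs_of_nonneg (by positivity : (0:ℝ) ≤ m), abs_of_nonneg (by positivity : (0:ℝ) ≤ 2 ^ k)]
  calc (m:ℝ) * (2 ^ k * _) ≤ m * (2 ^ k * 1) := by gcongr
    _ = _ := by ring

lemma abs_sum_le_card (f : ℕ → ℝ) (hf : ∀ i, |f i| ≤ 1) (s : Finset ℕ) : |∑ i ∈ s, f i| ≤ s.card := by
  refine (Finset.abs_sum_le_sum_abs _ _).trans ?_
  refine (Finset.sum_le_sum (fun i _ => hf i)).trans ?_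
  simp

lemma group_sum {c : ℝ} (h0 : 0 ≤ c) (h1 : c ≤ 1) {k ℓ m : ℕ} 
    (u : Fin ℓ → Bool) :
    |∑ i ∈ Finset.range (m * k * 2 ^ k * k), (ind (zz c k) u i - mu c u)|
      ≤ (ℓ + 1) * (m * k * 2 ^ k) := by
  rw [sum_mul, sum_mul]
  have sw : ∀ s ∈ Finset.range (m * k), ∑ q ∈ Finset.range (2 ^ k), ∑ r ∈ Finset.range k,
      (ind (zz c k) u ((s * 2 ^ k + q) * k + r) - mu c u)
      = ∑ r ∈ Finset.range k, ∑ q ∈ Finset.range (2 ^ k),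
      (ind (zz c k) u ((s * 2 ^ k + q) * k + r) - mu c u) := fun s _ => Finset.sum_comm
  rw [Finset.sum_congr rfl sw, Finset.sum_comm]
  refine (Finset.abs_sum_le_sum_abs _ _).trans ?_
  have hb : ∀ r ∈ Finset.range k, |∑ s ∈ Finset.range (m * k), ∑ q ∈ Finset.range (2 ^ k),
      (ind (zz c k) u ((s * 2 ^ k + q) * k + r) - mu c u)|
      ≤ m * 2 ^ k + if k - ℓ ≤ r then (m * k * 2 ^ k : ℝ) else 0 := by
    intro r hr
    rw [Finset.mem_range] at hr
    by_cases h : r + ℓ ≤ k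
    · refine (col_sum h0 h1 h u).trans ?_
      have : (0:ℝ) ≤ if k - ℓ ≤ r then (m * k * 2 ^ k : ℝ) else 0 := by split_ifs <;> positivity
      linarith
    · rw [if_pos (by omega)]
      have : |∑ s ∈ Finset.range (m * k), ∑ q ∈ Finset.range (2 ^ k),
        (ind (zz c k) u ((s * 2 ^ k + q) * k + r) - mu c u)| ≤ ((m * k * 2 ^ k : ℕ) : ℝ) := by
        rw [← sum_mul (fun i => ind (zz c k) u (i * k + r) - mu c u)]
        refine (abs_sum_le_card _ ?_ _).trans (by simp)
        intro i; exact d_abs h0 h1 _ _ _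
      push_cast at this
      have : (0:ℝ) ≤ m * 2 ^ k := by positivity
      linarith
  refine (Finset.sum_le_sum hb).trans ?_
  rw [Finset.sum_add_distrib, ← Finset.sum_filter]
  simp only [Finset.sum_const, Finset.card_range, nsmul_eq_mul]
  have hc : ((Finset.range k).filter (fun r => k - ℓ ≤ r)).card ≤ ℓ := by
    have : (Finset.range k).filter (fun r => k - ℓ ≤ r) ⊆ Finset.Ico (k - ℓ) k := by
      intro r; simp; omega
    have := Finset.card_le_card this
    rw [Nat.card_Ico] at this; omega
  have hc' : (((Finset.range k).filter (fun r => k - ℓ ≤ r)).card : ℝ) ≤ ℓ := by exact_mod_cast hc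
  have : (0:ℝ) ≤ m * k * 2 ^ k := by positivity
  nlinarith

lemma zz_sum {c : ℝ} (h0 : 0 ≤ c) (h1 : c ≤ 1) {k ℓ : ℕ} (hk : 0 < k)
    (u : Fin ℓ → Bool) (n : ℕ) :
    |∑ i ∈ Finset.range n, (ind (zz c k) u i - mu c u)|
      ≤ (ℓ + 1) / k * n + k * 2 ^ k * k := by
  set Q := k * 2 ^ k * k with hQ
  have hQ0 : 0 < Q := by positivity
  set m := n / Q with hm
  have e : n = m * k * 2 ^ k * k + n % Q := by
    have := Nat.div_add_mod n Q
    rw [← hm] at this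
    rw [← this]
    simp [hQ]; ring
  have hg := group_sum h0 h1 (k := k) (m := m) u
  have hlt : n % Q < Q := Nat.mod_lt _ hQ0
  conv_lhs => rw [e, Finset.sum_range_add]
  refine (abs_add_le _ _).trans ?_
  apply add_le_add
  · refine hg.trans ?_
    have : (m * k * 2 ^ k * k : ℝ) ≤ n := by
      have : m * k * 2 ^ k * k ≤ n := by omega
      exact_mod_cast this
    have hk' : (0:ℝ) < k := by exact_mod_cast hk
    calc ((ℓ:ℝ) + 1) * (m * k * 2 ^ k) = (ℓ + 1) / k * (m * k * 2 ^ k * k) := by field_simp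
      _ ≤ _ := by gcongr
  · refine (abs_sum_le_card _ (fun i => d_abs h0 h1 _ _ _) _).trans ?_
    rw [Finset.card_range]
    have : ((n % Q : ℕ) : ℝ) ≤ (Q : ℕ) := by exact_mod_cast hlt.le
    refine this.trans ?_
    rw [hQ]; push_cast; rfl

lemma ind_congr (c : ℝ) {k ℓ : ℕ} (u : Fin ℓ → Bool) {i : ℕ} (h1 : 4 ^ k ≤ i)
    (h2 : i + ℓ ≤ 4 ^ (k + 1)) : ind (xx c) u i = ind (zz c k) u i := by
  have : ∀ j : Fin ℓ, xx c (i + j) = zz c k (i + j) := by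
    intro j
    unfold xx
    rw [Nat.log_eq_of_pow_le_of_lt_pow (m := k) (by omega) (by omega)]
  unfold ind
  simp only [this]

/-- error of the counting function -/
noncomputable def SS (c : ℝ) {ℓ : ℕ} (u : Fin ℓ → Bool) (n : ℕ) : ℝ :=
  ∑ i ∈ Finset.range n, (ind (xx c) u i - mu c u)

lemma stage {c : ℝ} (h0 : 0 ≤ c) (h1 : c ≤ 1) {k ℓ : ℕ} (hk : 0 < k)
    (u : Fin ℓ → Bool) (n : ℕ) (hn : 4 ^ k ≤ n) (hn' : n ≤ 4 ^ (k + 1)) :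
    |SS c u n - SS c u (4 ^ k)| ≤ 2 * ((ℓ + 1) / k) * n + 2 * (k * 2 ^ k * k) + ℓ := by
  unfold SS
  rw [← Finset.sum_Ico_eq_sub _ hn]
  have e : ∑ i ∈ Finset.Ico (4 ^ k) n, (ind (xx c) u i - mu c u)
      = (∑ i ∈ Finset.range n, (ind (zz c k) u i - mu c u)
        - ∑ i ∈ Finset.range (4 ^ k), (ind (zz c k) u i - mu c u))
        + ∑ i ∈ Finset.Ico (4 ^ k) n, (ind (xx c) u i - ind (zz c k) u i) := by
    rw [← Finset.sum_Ico_eq_sub _ hn, ← Finset.sum_add_distrib]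
    apply Finset.sum_congr rfl; intros; ring
  have a1 := zz_sum h0 h1 hk u n
  have a2 := zz_sum h0 h1 hk u (4 ^ k)
  have a3 : |∑ i ∈ Finset.Ico (4 ^ k) n, (ind (xx c) u i - ind (zz c k) u i)| ≤ ℓ := by
    have hs : ∑ i ∈ Finset.Ico (4 ^ k) n, (ind (xx c) u i - ind (zz c k) u i)
        = ∑ i ∈ (Finset.Ico (4 ^ k) n).filter (fun i => ¬ (i + ℓ ≤ 4 ^ (k + 1))),
          (ind (xx c) u i - ind (zz c k) u i) := by
      rw [Finset.sum_filter]
      apply Finset.sum_congr rfl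
      intro i hi
      rw [Finset.mem_Ico] at hi
      split_ifs with h
      · rw [ind_congr c u hi.1 h, sub_self]
      · rfl
    rw [hs]
    refine (abs_sum_le_card _ ?_ _).trans ?_
    · intro i
      have := ind_mem (xx c) u i
      have := ind_mem (zz c k) u i
      rw [abs_le]; constructor <;> linarith
    · have : (Finset.Ico (4 ^ k) n).filter (fun i => ¬ (i + ℓ ≤ 4 ^ (k + 1)))
        ⊆ Finset.Ico (4 ^ (k + 1) - ℓ) (4 ^ (k + 1)) := by
        intro r; simp only [Finset.mem_filter, Finset.mem_Ico]; omega
      have := Finset.card_le_card this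
      rw [Nat.card_Ico] at this
      have : ((Finset.Ico (4 ^ k) n).filter (fun i => ¬ (i + ℓ ≤ 4 ^ (k + 1)))).card ≤ ℓ := by omega
      exact_mod_cast this
  have a4 : ((ℓ:ℝ) + 1) / k * ((4 ^ k : ℕ) : ℝ) ≤ (ℓ + 1) / k * n := by
    have : ((4 ^ k : ℕ) : ℝ) ≤ n := by exact_mod_cast hn
    gcongr
  rw [e]
  rw [abs_le] at *
  constructor <;> linarith

lemma SS_small {c : ℝ} (h0 : 0 ≤ c) (h1 : c ≤ 1) {ℓ : ℕ} (u : Fin ℓ → Bool) {η : ℝ} (hη : 0 < η) :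
    ∃ C : ℝ, ∃ N, ∀ n ≥ N, |SS c u n| ≤ C + η * n := by
  -- eventually in k, error of stage k is at most (η/3) 4^k
  have ev : ∀ᶠ k : ℕ in atTop, 2 * (((ℓ:ℝ) + 1) / k) ≤ η / 6 ∧
      2 * ((k:ℝ) * 2 ^ k * k) + ℓ ≤ η / 6 * 4 ^ k ∧ 0 < k := by
    refine Filter.Eventually.and ?_ (Filter.Eventually.and ?_ (eventually_gt_atTop 0))
    · have : Tendsto (fun k : ℕ => 2 * (((ℓ:ℝ) + 1) / k)) atTop (𝓝 (2 * 0)) :=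
        (tendsto_const_div_atTop_nhds_zero_nat _).const_mul 2
      rw [mul_zero] at this
      exact (this.eventually (gt_mem_nhds (by positivity : 0 < η / 6))).mono fun k hk => hk.le
    · have t1 := tendsto_pow_const_mul_const_pow_of_abs_lt_one 2 (r := (1/2:ℝ))
        (by rw [abs_of_pos] <;> norm_num)
      have t2 := tendsto_pow_atTop_nhds_zero_of_lt_one (r := (1/4:ℝ)) (by norm_num) (by norm_num)
      have t3 := (t1.const_mul 2).add (t2.const_mul (ℓ:ℝ))
      simp only [mul_zero, add_zero] at t3
      filter_upwards [t3.eventually (gt_mem_nhds (by positivity : 0 < η / 6))] with k hk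
      have h4 : (4:ℝ) ^ k = 2 ^ k * 2 ^ k := by rw [← mul_pow]; norm_num
      have hp : (0:ℝ) < 4 ^ k := by positivity
      have := mul_le_mul_of_nonneg_right hk.le hp.le
      refine le_trans (le_of_eq ?_) this
      simp only [one_div, inv_pow]
      rw [h4]
      field_simp
  obtain ⟨K, hK⟩ := eventually_atTop.1 ev
  have st : ∀ k ≥ K, ∀ n : ℕ, 4 ^ k ≤ n → n ≤ 4 ^ (k + 1) →
      |SS c u n| ≤ |SS c u (4 ^ k)| + η / 3 * n := by
    intro k hk n hn hn'
    obtain ⟨a, b, d⟩ := hK k hk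
    have := stage h0 h1 d u n hn hn'
    have hn2 : (4:ℝ) ^ k ≤ n := by exact_mod_cast hn
    have e1 : 2 * (((ℓ:ℝ) + 1) / k) * n ≤ η / 6 * n := by gcongr
    have e2 : η / 6 * (4:ℝ) ^ k ≤ η / 6 * n := by gcongr
    have e3 := abs_sub_abs_le_abs_sub (SS c u n) (SS c u (4 ^ k))
    linarith
  have ind4 : ∀ k ≥ K, |SS c u (4 ^ k)| ≤ |SS c u (4 ^ K)| + (2 * η / 3) * 4 ^ k := by
    intro k hk
    induction k, hk using Nat.le_induction with
    | base => have : 0 ≤ (2 * η / 3) * (4:ℝ) ^ K := by positivity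
              linarith
    | succ k hk ih =>
      have := st k hk (4 ^ (k + 1)) (Nat.pow_le_pow_right (by norm_num) (by omega)) le_rfl
      push_cast at this
      have hp : (0:ℝ) < η * 4 ^ k := by positivity
      rw [pow_succ (4:ℝ)] at this ⊢
      linarith
  refine ⟨|SS c u (4 ^ K)|, 4 ^ K, fun n hn => ?_⟩
  have hn0 : n ≠ 0 := by have : 0 < 4 ^ K := by positivity
                         omega
  have hk : K ≤ Nat.log 4 n := (Nat.le_log_iff_pow_le (by norm_num) hn0).2 hn
  have hl1 : 4 ^ Nat.log 4 n ≤ n := Nat.pow_log_le_self 4 hn0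
  have hl2 : n < 4 ^ (Nat.log 4 n + 1) := Nat.lt_pow_succ_log_self (by norm_num) n
  have q1 := st _ hk n hl1 hl2.le
  have q2 := ind4 _ hk
  have q3 : (4:ℝ) ^ Nat.log 4 n ≤ n := by exact_mod_cast hl1
  have q4 : (2 * η / 3) * (4:ℝ) ^ Nat.log 4 n ≤ (2 * η / 3) * n := by gcongr
  linarith

lemma freq {c : ℝ} (h0 : 0 ≤ c) (h1 : c ≤ 1) {ℓ : ℕ} (u : Fin ℓ → Bool) :
    Tendsto (fun n : ℕ => (∑ i ∈ Finset.range n, ind (xx c) u i) / n) atTop (𝓝 (mu c u)) := by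
  have key : Tendsto (fun n : ℕ => SS c u n / n) atTop (𝓝 0) := by
    rw [Metric.tendsto_atTop]
    intro η hη
    obtain ⟨C, N, hN⟩ := SS_small h0 h1 u (half_pos hη)
    have hC := (tendsto_const_div_atTop_nhds_zero_nat C).eventually (gt_mem_nhds (half_pos hη))
    obtain ⟨M, hM⟩ := eventually_atTop.1 hC
    refine ⟨max (max N M) 1, fun n hn => ?_⟩
    have hn0 : (0:ℝ) < n := by
      have : 1 ≤ n := le_trans (le_max_right _ _) hn
      exact_mod_cast this
    have a := hN n (le_trans (le_trans (le_max_left _ _) (le_max_left _ _)) hn)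
    have b := hM n (le_trans (le_trans (le_max_right _ _) (le_max_left _ _)) hn)
    rw [Real.dist_eq, sub_zero, abs_div, abs_of_pos hn0, div_lt_iff₀ hn0]
    rw [div_lt_iff₀ hn0] at b
    linarith
  have := key.add_const (mu c u)
  rw [zero_add] at this
  refine this.congr' ?_
  filter_upwards [eventually_gt_atTop 0] with n hn
  have hn0 : (n:ℝ) ≠ 0 := by positivity
  unfold SS
  rw [Finset.sum_sub_distrib]
  simp
  field_simp
  ring

end Constr
namespace Constr

lemma freq_shift {c : ℝ} (h0 : 0 ≤ c) (h1 : c ≤ 1) {ℓ : ℕ} (u : Fin ℓ → Bool) (m : ℕ) :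
    Tendsto (fun n : ℕ => (∑ i ∈ Finset.range (n - m), ind (xx c) u i) / ((n:ℝ) - m)) atTop
      (𝓝 (mu c u)) := by
  have := (freq h0 h1 u).comp (tendsto_sub_atTop_nat m)
  refine this.congr' ?_
  filter_upwards [eventually_ge_atTop m] with n hn
  simp only [Function.comp, Nat.cast_sub hn]

lemma occ_eq (x : ℕ → Bool) (n : ℕ) {ℓ : ℕ} (u : Fin ℓ → Bool) :
    (occ x n (List.ofFn u) : ℝ) = ∑ i ∈ Finset.range (n + 1 - ℓ), ind x u i := by
  unfold occ ind factor
  rw [Finset.card_filter]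
  push_cast
  rw [List.length_ofFn]
  apply Finset.sum_congr rfl
  intro i _
  have : (List.ofFn (fun j : Fin ℓ => x (i + j)) = List.ofFn u) ↔ ∀ j : Fin ℓ, x (i + j) = u j := by
    rw [List.ofFn_inj]
    exact funext_iff
  simp only [this]

lemma occ_tendsto {c : ℝ} (h0 : 0 ≤ c) (h1 : c ≤ 1) {ℓ : ℕ} (u : Fin ℓ → Bool) :
    Tendsto (fun n : ℕ => (occ (xx c) n (List.ofFn u) : ℝ) / ((n:ℝ) - ℓ + 1)) atTop
      (𝓝 (mu c u)) := by
  have := (freq_shift h0 h1 u ℓ).comp (tendsto_add_atTop_nat 1)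
  refine this.congr fun n => ?_
  simp only [Function.comp, occ_eq]
  push_cast
  congr 1; ring

lemma continuous_mul_logb : Continuous fun x : ℝ => x * Real.logb 2 x := by
  have := Real.continuous_mul_log.div_const (Real.log 2)
  refine this.congr fun x => ?_
  rw [Real.logb]; ring

/-- limit block entropy -/
noncomputable def HH (c : ℝ) (ℓ : ℕ) : ℝ :=
  -(1 / (ℓ : ℝ)) * ∑ u : Fin ℓ → Bool, mu c u * Real.logb 2 (mu c u)

lemma hBlock_tendsto {c : ℝ} (h0 : 0 ≤ c) (h1 : c ≤ 1) (ℓ : ℕ) :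
    Tendsto (fun n => hBlock ℓ (xx c) n) atTop (𝓝 (HH c ℓ)) := by
  unfold hBlock HH
  apply Tendsto.const_mul
  apply tendsto_finsetSum
  intro u _
  exact (continuous_mul_logb.tendsto _).comp (occ_tendsto h0 h1 u)

lemma zo_false (ℓ : ℕ) : zo (fun _ : Fin ℓ => false) = 1 := by simp [zo]

lemma zo_ne {ℓ : ℕ} {u : Fin ℓ → Bool} (j : Fin ℓ) (h : u j = true) : zo u = 0 := by
  unfold zo
  rw [if_neg]
  intro hh
  simp [hh j] at h

lemma HH_eq (c : ℝ) (ℓ : ℕ) (hℓ : 0 < ℓ) : HH c ℓ =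
    (1 - (1/2:ℝ) ^ ℓ) * (c - (1 / (ℓ:ℝ)) * (c * Real.logb 2 c))
      - (1 / (ℓ:ℝ)) * ((c * (1/2:ℝ) ^ ℓ + (1 - c)) * Real.logb 2 (c * (1/2:ℝ) ^ ℓ + (1 - c))) := by
  unfold HH
  have hl : (ℓ:ℝ) ≠ 0 := by positivity
  rw [Fintype.sum_eq_add_sum_compl (fun _ : Fin ℓ => false)]
  have e : ∀ u ∈ ({fun _ : Fin ℓ => false}ᶜ : Finset (Fin ℓ → Bool)),
      mu c u * Real.logb 2 (mu c u) = (1/2:ℝ) ^ ℓ * (c * Real.logb 2 c - c * ℓ) := by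
    intro u hu
    have : ∃ j, u j = true := by
      by_contra! hh
      apply Finset.mem_compl.1 hu
      rw [Finset.mem_singleton]
      funext j
      simpa using hh j
    obtain ⟨j, hj⟩ := this
    have hm : mu c u = c * (1/2:ℝ) ^ ℓ := by
      unfold mu; rw [zo_ne j hj, mul_zero, add_zero, one_div_pow]
    rw [hm]
    by_cases hc : c = 0
    · simp [hc]
    · rw [Real.logb_mul hc (by positivity), Real.logb_pow]
      simp
      ring
  rw [Finset.sum_congr rfl e]
  have hm : mu c (fun _ : Fin ℓ => false) = c * (1/2:ℝ) ^ ℓ + (1 - c) := by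
    unfold mu; rw [zo_false, one_div_pow, mul_one]
  rw [hm, Finset.sum_const, Finset.card_compl, Finset.card_singleton]
  simp only [Fintype.card_pi, Fintype.card_bool, Finset.prod_const, Finset.card_univ, Fintype.card_fin,
    nsmul_eq_mul]
  rw [Nat.cast_sub Nat.one_le_two_pow]
  push_cast
  have : ((2:ℝ) ^ ℓ - 1) * ((1/2:ℝ) ^ ℓ * (c * Real.logb 2 c - c * ℓ))
      = (1 - (1/2:ℝ) ^ ℓ) * (c * Real.logb 2 c - c * ℓ) := by
    rw [← mul_assoc, sub_mul, ← mul_pow]; norm_num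
  rw [this]
  field_simp
  ring

lemma HH_tendsto (c : ℝ) : Tendsto (HH c) atTop (𝓝 c) := by
  have t1 : Tendsto (fun ℓ : ℕ => (1/2:ℝ) ^ ℓ) atTop (𝓝 0) :=
    tendsto_pow_atTop_nhds_zero_of_lt_one (by norm_num) (by norm_num)
  have t2 : Tendsto (fun ℓ : ℕ => 1 / (ℓ:ℝ)) atTop (𝓝 0) := tendsto_const_div_atTop_nhds_zero_nat 1
  have t3 : Tendsto (fun ℓ : ℕ => c * (1/2:ℝ) ^ ℓ + (1 - c)) atTop (𝓝 (c * 0 + (1 - c))) :=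
    (t1.const_mul c).add_const _
  have t4 := (continuous_mul_logb.tendsto _).comp t3
  have t5 := ((t1.const_sub 1).mul ((t2.mul_const (c * Real.logb 2 c)).const_sub c)).sub (t2.mul t4)
  have t6 : Tendsto (HH c) atTop (𝓝 ((1 - 0) * (c - 0 * (c * Real.logb 2 c)) - 0 * ((c * 0 + (1 - c)) *
      Real.logb 2 (c * 0 + (1 - c))))) := by
    refine t5.congr' ?_
    filter_upwards [eventually_gt_atTop 0] with ℓ hℓ
    rw [HH_eq c ℓ hℓ]
    rfl
  simpa using t6

open Classical in
lemma gamma_pt (x : ℕ → Bool) {ℓ : ℕ} (f : (Fin ℓ → Bool) → Bool) (i : ℕ) :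
    (if x (i + ℓ) ≠ f (fun j => x (i + j)) then (1:ℝ) else 0)
      = ∑ v : Fin ℓ → Bool, ind x (Fin.snoc v (!f v) : Fin (ℓ + 1) → Bool) i := by
  have key : ∀ v : Fin ℓ → Bool, (∀ j : Fin (ℓ + 1), x (i + j)
      = (Fin.snoc v (!f v) : Fin (ℓ + 1) → Bool) j)
      ↔ ((∀ j : Fin ℓ, x (i + j) = v j) ∧ x (i + ℓ) = !f v) := by
    intro v
    rw [Fin.forall_fin_succ']
    simp
  rw [Finset.sum_eq_single (fun j : Fin ℓ => x (i + j))]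
  · unfold ind
    simp only [key]
    simp
    generalize f _ = b
    generalize x _ = a
    cases a <;> cases b <;> simp
  · intro v _ hv
    unfold ind
    rw [if_neg]
    rw [key]
    rintro ⟨h, _⟩
    exact hv (funext fun j => (h j).symm)
  · simp

open Classical in
lemma beta_pt (x : ℕ → Bool) {ℓ : ℕ} (f : (Fin ℓ → Bool) → Bool) (i : ℕ) :
    (if x i ≠ f (fun j => x (i + 1 + j)) then (1:ℝ) else 0)
      = ∑ v : Fin ℓ → Bool, ind x (Fin.cons (!f v) v : Fin (ℓ + 1) → Bool) i := by
  have key : ∀ v : Fin ℓ → Bool, (∀ j : Fin (ℓ + 1), x (i + j)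
      = (Fin.cons (!f v) v : Fin (ℓ + 1) → Bool) j)
      ↔ (x i = (!f v) ∧ (∀ j : Fin ℓ, x (i + 1 + j) = v j)) := by
    intro v
    rw [Fin.forall_fin_succ]
    simp [add_assoc, add_comm 1]
  rw [Finset.sum_eq_single (fun j : Fin ℓ => x (i + 1 + j))]
  · unfold ind
    simp only [key]
    simp
    generalize f _ = b
    generalize x _ = a
    cases a <;> cases b <;> simp
  · intro v _ hv
    unfold ind
    rw [if_neg]
    rw [key]
    rintro ⟨_, h⟩
    exact hv (funext fun j => (h j).symm)
  · simp

/-- Common convergence argument. -/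
lemma inf_tendsto {c : ℝ} (h0 : 0 ≤ c) (h1 : c ≤ 1) {ℓ : ℕ}
    (w : (Fin ℓ → Bool) → Bool → (Fin (ℓ + 1) → Bool)) (hw : ∀ v, ∃ j, w v true j = true)
    (g : ((Fin ℓ → Bool) → Bool) → ℕ → ℝ)
    (hg : ∀ f n, g f n = ∑ i ∈ Finset.range (n - ℓ), ∑ v, ind (xx c) (w v (!f v)) i) :
    Tendsto (fun n : ℕ => (1 / ((n:ℝ) - ℓ)) *
      ((Finset.univ : Finset ((Fin ℓ → Bool) → Bool)).inf' Finset.univ_nonempty (fun f => g f n)))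
      atTop (𝓝 (c / 2)) := by
  have t : ∀ f, Tendsto (fun n : ℕ => (1 / ((n:ℝ) - ℓ)) * g f n) atTop
      (𝓝 (∑ v, mu c (w v (!f v)))) := by
    intro f
    have : Tendsto (fun n : ℕ => ∑ v, (∑ i ∈ Finset.range (n - ℓ), ind (xx c) (w v (!f v)) i)
        / ((n:ℝ) - ℓ)) atTop (𝓝 (∑ v, mu c (w v (!f v)))) :=
      tendsto_finsetSum _ fun v _ => freq_shift h0 h1 _ ℓ
    refine this.congr fun n => ?_
    rw [hg, Finset.sum_comm, ← Finset.sum_div]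
    ring
  have t2 := Tendsto.finset_inf'_nhds_apply (s := (Finset.univ : Finset ((Fin ℓ → Bool) → Bool)))
    Finset.univ_nonempty (fun f _ => t f)
  have lim : (Finset.univ : Finset ((Fin ℓ → Bool) → Bool)).inf' Finset.univ_nonempty
      (fun f => ∑ v, mu c (w v (!f v))) = c / 2 := by
    have card : ∑ v : Fin ℓ → Bool, c * (1 / (2:ℝ) ^ (ℓ + 1)) = c / 2 := by
      simp [pow_succ]
      field_simp
    apply le_antisymm
    · refine (Finset.inf'_le _ (Finset.mem_univ (fun _ => false))).trans ?_
      rw [← card]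
      apply le_of_eq
      apply Finset.sum_congr rfl
      intro v _
      obtain ⟨j, hj⟩ := hw v
      unfold mu
      rw [Bool.not_false, zo_ne j hj, mul_zero, add_zero]
    · apply Finset.le_inf'
      intro f _
      rw [← card]
      apply Finset.sum_le_sum
      intro v _
      unfold mu
      have : 0 ≤ (1 - c) * zo (w v (!f v)) := mul_nonneg (by linarith) (zo_mem _).1
      linarith
  rw [lim] at t2
  refine t2.congr' ?_
  filter_upwards [eventually_ge_atTop ℓ] with n hn
  have hp : 0 ≤ 1 / ((n:ℝ) - ℓ) := by
    have : (ℓ:ℝ) ≤ n := by exact_mod_cast hn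
    have : 0 ≤ (n:ℝ) - ℓ := by linarith
    positivity
  have hm : Monotone (fun y : ℝ => (1 / ((n:ℝ) - ℓ)) * y) := fun a b h =>
    mul_le_mul_of_nonneg_left h hp
  exact (Finset.apply_inf'_eq_inf'_comp Finset.univ_nonempty
    (fun y : ℝ => (1 / ((n:ℝ) - ℓ)) * y) (fun a b => hm.map_inf a b)).symm

lemma gamma_tendsto {c : ℝ} (h0 : 0 ≤ c) (h1 : c ≤ 1) (ℓ : ℕ) :
    Tendsto (fun n => gammaWord ℓ (xx c) n) atTop (𝓝 (c / 2)) := by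
  unfold gammaWord
  refine inf_tendsto h0 h1 (fun v b => Fin.snoc v b) (fun v => ⟨Fin.last _, by simp⟩) _ ?_
  intro f n
  rw [Finset.card_filter]
  push_cast
  rw [Finset.sum_Ico_eq_sum_range]
  apply Finset.sum_congr rfl
  intro i _
  rw [← gamma_pt]
  simp only [add_comm ℓ i, Nat.add_sub_cancel]

lemma beta_tendsto {c : ℝ} (h0 : 0 ≤ c) (h1 : c ≤ 1) (ℓ : ℕ) :
    Tendsto (fun n => betaWord ℓ (xx c) n) atTop (𝓝 (c / 2)) := by
  unfold betaWord
  refine inf_tendsto h0 h1 (fun v b => Fin.cons b v) (fun v => ⟨0, by simp⟩) _ ?_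
  intro f n
  rw [Finset.card_filter]
  push_cast
  apply Finset.sum_congr rfl
  intro i _
  rw [← beta_pt]

end Constr

theorem exists_seq_entropy_le_two_alpha_add_eps (α : ℝ) (h0 : 0 ≤ α) (h1 : α ≤ 1 / 2)
    (ε : ℝ) (hε : 0 < ε) :
    ∃ x : ℕ → Bool,
      gammaLow x = α ∧ gammaUp x = α ∧ betaLow x = α ∧ betaUp x = α ∧
      hLow x = hUp x ∧ hUp x ≤ 2 * α + ε := by
  have c0 : 0 ≤ 2 * α := by linarith
  have c1 : 2 * α ≤ 1 := by linarith
  have e2 : 2 * α / 2 = α := by ring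
  have g := fun ℓ => e2 ▸ Constr.gamma_tendsto c0 c1 ℓ
  have b := fun ℓ => e2 ▸ Constr.beta_tendsto c0 c1 ℓ
  have h := fun ℓ => Constr.hBlock_tendsto c0 c1 ℓ
  have hl : hLow (Constr.xx (2 * α)) = 2 * α := by
    unfold hLow
    simp only [(h _).liminf_eq]
    exact (Constr.HH_tendsto _).liminf_eq
  have hu : hUp (Constr.xx (2 * α)) = 2 * α := by
    unfold hUp
    simp only [(h _).limsup_eq]
    exact (Constr.HH_tendsto _).limsup_eq
  refine ⟨Constr.xx (2 * α), ?_, ?_, ?_, ?_, hl.trans hu.symm, by linarith⟩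
  · unfold gammaLow
    simp only [(g _).liminf_eq, liminf_const]
  · unfold gammaUp
    simp only [(g _).limsup_eq, limsup_const]
  · unfold betaLow
    simp only [(b _).liminf_eq, liminf_const]
  · unfold betaUp
    simp only [(b _).limsup_eq, limsup_const]
end

section
/- For all x, y, z ∈ B^ℕ such that val(z) equals the fractional part of val(x) + val(y), it holds that h̲(x) − h̄(y) ≤ h̲(z) ≤ h̲(x) + h̄(y). -/
open Filter Topology

/-- Number of indices in `S` at which `a` takes the value `u`. -/
def cntE {A : Type} [DecidableEq A] (S : Finset ℕ) (a : ℕ → A) (u : A) : ℕ :=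
  (S.filter (fun i => a i = u)).card

/-- Empirical entropy. -/
noncomputable def entE {A : Type} [DecidableEq A] [Fintype A] (S : Finset ℕ) (a : ℕ → A) : ℝ :=
  -∑ u : A, ((cntE S a u : ℝ) / S.card) * Real.logb 2 ((cntE S a u : ℝ) / S.card)

theorem cntE_pos {A : Type} [DecidableEq A] (S : Finset ℕ) (a : ℕ → A) {i : ℕ} (hi : i ∈ S) :
    0 < cntE S a (a i) := by
  unfold cntE
  exact Finset.card_pos.mpr ⟨i, by simp [hi]⟩

theorem sum_cntE {A : Type} [DecidableEq A] [Fintype A] (S : Finset ℕ) (a : ℕ → A) :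
    ∑ u : A, (cntE S a u : ℝ) = S.card := by
  have h := Finset.sum_fiberwise S a (fun _ => (1 : ℝ))
  simpa [cntE] using h

theorem entE_eq {A : Type} [DecidableEq A] [Fintype A] (S : Finset ℕ) (a : ℕ → A) :
    entE S a = -(∑ i ∈ S, Real.logb 2 ((cntE S a (a i) : ℝ) / S.card)) / S.card := by
  have h := Finset.sum_fiberwise' S a (fun u => Real.logb 2 ((cntE S a u : ℝ) / S.card))
  rw [entE, ← h, neg_div, Finset.sum_div]
  congr 1
  apply Finset.sum_congr rfl
  intro u _
  rw [Finset.sum_const, nsmul_eq_mul, cntE]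
  ring

theorem entE_le {A B C D : Type} [DecidableEq A] [Fintype A] [DecidableEq B] [Fintype B]
    [DecidableEq C] [Fintype C] [DecidableEq D] [Fintype D]
    (S : Finset ℕ) (hS : S.Nonempty) (a : ℕ → A) (b : ℕ → B) (c : ℕ → C) (d : ℕ → D)
    (h : ∀ i ∈ S, ∀ j ∈ S, b i = b j → c i = c j → d i = d j → a i = a j) :
    entE S a ≤ entE S b + entE S c + Real.logb 2 (Fintype.card D) := by
  have hN : (0 : ℝ) < S.card := by exact_mod_cast hS.card_pos
  obtain ⟨i0, hi0⟩ := hS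
  have hD : (0 : ℝ) < Fintype.card D := by
    exact_mod_cast Fintype.card_pos_iff.mpr ⟨d i0⟩
  have hl2 : 0 < Real.log 2 := Real.log_pos (by norm_num)
  set N : ℝ := (S.card : ℝ) with hNdef
  let g : ℕ → B × C × D := fun i => (b i, c i, d i)
  let w : B × C × D → ℝ := fun v =>
    ((cntE S b v.1 : ℝ) / N) * ((cntE S c v.2.1 : ℝ) / N) * (1 / Fintype.card D)
  have hw0 : ∀ v, 0 ≤ w v := fun v => by positivity
  have hw : ∑ v, w v = 1 := by
    simp only [w, Fintype.sum_prod_type]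
    simp only [← Finset.mul_sum, ← Finset.sum_mul, ← Finset.sum_div, sum_cntE, Finset.sum_const,
      Finset.card_univ, nsmul_eq_mul]
    rw [← hNdef]
    field_simp
  let t : ℕ → ℝ := fun i => w (g i) / ((cntE S a (a i) : ℝ) / N)
  have hterm : ∀ i ∈ S, Real.logb 2 ((cntE S b (b i) : ℝ) / N)
      + Real.logb 2 ((cntE S c (c i) : ℝ) / N) - Real.logb 2 (Fintype.card D)
      - Real.logb 2 ((cntE S a (a i) : ℝ) / N) ≤ (t i - 1) / Real.log 2 := by
    intro i hi
    have ha : (0 : ℝ) < cntE S a (a i) := by exact_mod_cast cntE_pos S a hi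
    have hb : (0 : ℝ) < cntE S b (b i) := by exact_mod_cast cntE_pos S b hi
    have hc : (0 : ℝ) < cntE S c (c i) := by exact_mod_cast cntE_pos S c hi
    have ht : 0 < t i := by simp only [t, w, g]; positivity
    have e : Real.logb 2 (t i) = Real.logb 2 ((cntE S b (b i) : ℝ) / N)
      + Real.logb 2 ((cntE S c (c i) : ℝ) / N) - Real.logb 2 (Fintype.card D)
      - Real.logb 2 ((cntE S a (a i) : ℝ) / N) := by
      simp only [t, w, g]
      rw [Real.logb_div (by positivity) (by positivity),
        Real.logb_mul (by positivity) (by positivity),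
        Real.logb_mul (by positivity) (by positivity),
        Real.logb_div (x := 1) (by positivity) (by positivity), Real.logb_one]
      ring
    rw [← e, Real.logb]
    exact div_le_div_of_nonneg_right (Real.log_le_sub_one_of_pos ht) hl2.le
  have ht : ∑ i ∈ S, t i ≤ N := by
    calc ∑ i ∈ S, t i ≤ ∑ i ∈ S, (fun v => w v * N / (cntE S g v : ℝ)) (g i) := by
          apply Finset.sum_le_sum
          intro i hi
          have ha : (0 : ℝ) < cntE S a (a i) := by exact_mod_cast cntE_pos S a hi
          have hg : (0 : ℝ) < cntE S g (g i) := by exact_mod_cast cntE_pos S g hi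
          have hle : (cntE S g (g i) : ℝ) ≤ cntE S a (a i) := by
            unfold cntE
            norm_cast
            apply Finset.card_le_card
            intro j hj
            simp only [Finset.mem_filter, g, Prod.mk.injEq] at hj ⊢
            exact ⟨hj.1, h j hj.1 i hi hj.2.1 hj.2.2.1 hj.2.2.2⟩
          have : t i = w (g i) * N / (cntE S a (a i) : ℝ) := by
            simp only [t]; field_simp
          rw [this]
          exact div_le_div_of_nonneg_left (mul_nonneg (hw0 _) hN.le) hg hle
      _ = ∑ v, ∑ i ∈ S with g i = v, w v * N / (cntE S g v : ℝ) :=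
          (Finset.sum_fiberwise' S g (fun v => w v * N / (cntE S g v : ℝ))).symm
      _ ≤ ∑ v, w v * N := by
          apply Finset.sum_le_sum
          intro v _
          rw [Finset.sum_const, nsmul_eq_mul]
          change (cntE S g v : ℝ) * _ ≤ _
          have hwN : 0 ≤ w v * N := mul_nonneg (hw0 _) hN.le
          rcases eq_or_ne (cntE S g v : ℝ) 0 with h0 | h0
          · rw [h0]; simpa using hwN
          · rw [mul_div_cancel₀ _ h0]
      _ = N := by rw [← Finset.sum_mul, hw, one_mul]
  have hsum := Finset.sum_le_sum hterm
  have hr : ∑ i ∈ S, (t i - 1) / Real.log 2 ≤ 0 := by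
    rw [← Finset.sum_div, Finset.sum_sub_distrib]
    apply div_nonpos_of_nonpos_of_nonneg _ hl2.le
    simp only [Finset.sum_const, nsmul_eq_mul, mul_one]
    linarith
  have hs2 := hsum.trans hr
  rw [Finset.sum_sub_distrib, Finset.sum_sub_distrib, Finset.sum_add_distrib, Finset.sum_const,
    nsmul_eq_mul] at hs2
  rw [entE_eq, entE_eq, entE_eq, ← hNdef]
  have hN' : N * Real.logb 2 (Fintype.card D) / N = Real.logb 2 (Fintype.card D) := by
    field_simp
  rw [← hN', ← add_div, ← add_div]
  apply div_le_div_of_nonneg_right _ hN.le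
  linarith

theorem entE_nonneg {A : Type} [DecidableEq A] [Fintype A] (S : Finset ℕ) (a : ℕ → A) :
    0 ≤ entE S a := by
  unfold entE
  rw [neg_nonneg]
  apply Finset.sum_nonpos
  intro u _
  apply mul_nonpos_of_nonneg_of_nonpos (by positivity)
  apply Real.logb_nonpos (by norm_num) (by positivity)
  apply div_le_one_of_le₀ _ (by positivity)
  exact_mod_cast Finset.card_filter_le _ _

/-- Block at position `i`. -/
def blkE (ℓ : ℕ) (x : ℕ → Bool) (i : ℕ) : Fin ℓ → Bool := fun j => x (i + j)

theorem hBlock_eq (ℓ : ℕ) (x : ℕ → Bool) (n : ℕ) (hn : ℓ ≤ n) :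
    hBlock ℓ x n = entE (Finset.range (n + 1 - ℓ)) (blkE ℓ x) / ℓ := by
  have hc : ((n : ℝ) - ℓ + 1) = ((Finset.range (n + 1 - ℓ)).card : ℝ) := by
    rw [Finset.card_range, Nat.cast_sub (by omega)]
    push_cast; ring
  have ho : ∀ u : Fin ℓ → Bool,
      occ x n (List.ofFn u) = cntE (Finset.range (n + 1 - ℓ)) (blkE ℓ x) u := by
    intro u
    unfold occ cntE factor blkE
    simp only [List.length_ofFn]
    congr 1
    ext i
    simp only [Finset.mem_filter, and_congr_right_iff]
    intro _
    constructor
    · intro h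
      apply List.ofFn_injective
      rw [← h]
      apply List.ext_getElem <;> simp
    · intro h
      rw [← h]
      apply List.ext_getElem <;> simp
  unfold hBlock entE
  simp only [ho, hc]
  ring

theorem entE_unit (S : Finset ℕ) (hS : S.Nonempty) : entE S (fun _ => ()) = 0 := by
  have hN : (S.card : ℝ) ≠ 0 := by exact_mod_cast hS.card_pos.ne'
  simp [entE, cntE, hN]

theorem range_ne (ℓ n : ℕ) (hn : ℓ ≤ n) : (Finset.range (n + 1 - ℓ)).Nonempty := by
  rw [Finset.nonempty_range_iff]; omega

theorem hBlock_nonneg (ℓ : ℕ) (x : ℕ → Bool) (n : ℕ) (hn : ℓ ≤ n) : 0 ≤ hBlock ℓ x n := by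
  rw [hBlock_eq ℓ x n hn]
  exact div_nonneg (entE_nonneg _ _) (by positivity)

theorem hBlock_le_one (ℓ : ℕ) (x : ℕ → Bool) (n : ℕ) (hn : ℓ ≤ n) : hBlock ℓ x n ≤ 1 := by
  rw [hBlock_eq ℓ x n hn]
  apply div_le_one_of_le₀ _ (by positivity)
  have h := entE_le _ (range_ne ℓ n hn) (blkE ℓ x) (fun _ => ()) (fun _ => ()) (blkE ℓ x)
    (fun i _ j _ _ _ h => h)
  rw [entE_unit _ (range_ne ℓ n hn)] at h
  simpa [Real.logb_pow] using h

/-- Tail value. -/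
noncomputable def tailE (x : ℕ → Bool) (i : ℕ) : ℝ := val (fun n => x (i + n))

/-- Integer encoded by a block. -/
def numE (x : ℕ → Bool) (i : ℕ) : ℕ → ℕ
  | 0 => 0
  | ℓ + 1 => 2 * numE x i ℓ + (x (i + ℓ)).toNat

theorem numE_lt (x : ℕ → Bool) (i ℓ : ℕ) : numE x i ℓ < 2 ^ ℓ := by
  induction ℓ with
  | zero => simp [numE]
  | succ k ih =>
    have := Bool.toNat_le (x (i + k))
    rw [numE, pow_succ]; omega

theorem numE_inj (x : ℕ → Bool) (i j ℓ : ℕ) (h : numE x i ℓ = numE x j ℓ) :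
    ∀ k < ℓ, x (i + k) = x (j + k) := by
  induction ℓ with
  | zero => intro k hk; omega
  | succ m ih =>
    rw [numE, numE] at h
    have h1 := Bool.toNat_le (x (i + m))
    have h2 := Bool.toNat_le (x (j + m))
    intro k hk
    rcases Nat.lt_succ_iff_lt_or_eq.mp hk with hk | rfl
    · exact ih (by omega) k hk
    · have h3 : (x (i + k)).toNat = (x (j + k)).toNat := by omega
      revert h3
      cases x (i + k) <;> cases x (j + k) <;> simp

theorem numE_congr (x : ℕ → Bool) (i j ℓ : ℕ) (h : ∀ k < ℓ, x (i + k) = x (j + k)) :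
    numE x i ℓ = numE x j ℓ := by
  induction ℓ with
  | zero => rfl
  | succ m ih =>
    rw [numE, numE, ih (fun k hk => h k (by omega)), h m (by omega)]

theorem blkE_eq_iff (x : ℕ → Bool) (i j ℓ : ℕ) :
    blkE ℓ x i = blkE ℓ x j ↔ numE x i ℓ = numE x j ℓ := by
  constructor
  · intro h
    apply numE_congr
    intro k hk
    exact congrFun h ⟨k, hk⟩
  · intro h
    funext k
    exact numE_inj x i j ℓ h k k.2

theorem summable_half : Summable (fun n : ℕ => (1 : ℝ) / 2 ^ (n + 1)) := by
  have := summable_geometric_two' (1 : ℝ)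
  refine this.congr ?_
  intro n
  rw [pow_succ]; field_simp

theorem tsum_half : ∑' n : ℕ, (1 : ℝ) / 2 ^ (n + 1) = 1 := by
  refine Eq.trans ?_ (tsum_geometric_two' (1 : ℝ))
  apply tsum_congr
  intro n
  rw [pow_succ]; field_simp

theorem val_summable (x : ℕ → Bool) :
    Summable (fun n : ℕ => (if x n then (1 : ℝ) else 0) / 2 ^ (n + 1)) := by
  refine Summable.of_nonneg_of_le (fun n => ?_) (fun n => ?_) summable_half
  · split_ifs <;> positivity
  · apply div_le_div_of_nonneg_right _ (by positivity)
    split_ifs <;> norm_num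

theorem val_nonneg (x : ℕ → Bool) : 0 ≤ val x := by
  apply tsum_nonneg
  intro n
  split_ifs <;> positivity

theorem val_le_one (x : ℕ → Bool) : val x ≤ 1 := by
  rw [← tsum_half]
  refine Summable.tsum_le_tsum (fun n => ?_) (val_summable x) summable_half
  apply div_le_div_of_nonneg_right _ (by positivity)
  split_ifs <;> norm_num

theorem val_step (x : ℕ → Bool) :
    2 * val x = (x 0).toNat + val (fun n => x (1 + n)) := by
  unfold val
  rw [(val_summable x).tsum_eq_zero_add, mul_add, ← tsum_mul_left]
  congr 1
  · cases x 0 <;> simp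
  · apply tsum_congr
    intro n
    simp only [add_comm 1 n]
    rw [pow_succ _ (n + 1)]
    field_simp

theorem tailE_step (x : ℕ → Bool) (i : ℕ) :
    2 * tailE x i = (x i).toNat + tailE x (i + 1) := by
  unfold tailE
  rw [val_step]
  simp only [add_zero, add_assoc]

theorem tailE_block (x : ℕ → Bool) (i ℓ : ℕ) :
    2 ^ ℓ * tailE x i = numE x i ℓ + tailE x (i + ℓ) := by
  induction ℓ with
  | zero => simp [numE]
  | succ k ih =>
    rw [pow_succ, mul_right_comm, ih, numE]
    have := tailE_step x (i + k)
    rw [add_assoc i k 1] at this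
    push_cast
    linarith

theorem carry_exists (x y z : ℕ → Bool) (m : ℤ) (h : val z = val x + val y - m) (i : ℕ) :
    ∃ m : ℤ, tailE z i = tailE x i + tailE y i - m := by
  induction i with
  | zero => exact ⟨m, by simpa [tailE] using h⟩
  | succ k ih =>
    obtain ⟨m, hm⟩ := ih
    have hx := tailE_step x k
    have hy := tailE_step y k
    have hz := tailE_step z k
    refine ⟨2 * m + (z k).toNat - (x k).toNat - (y k).toNat, ?_⟩
    push_cast
    linarith

theorem carry_bdd (x y z : ℕ → Bool) (m : ℤ) (h : val z = val x + val y - m) (i : ℕ) :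
    ∃ e : Fin 4, tailE x i + tailE y i - tailE z i = ((e : ℕ) : ℝ) - 1 := by
  obtain ⟨m, hm⟩ := carry_exists x y z m h i
  have hx0 : 0 ≤ tailE x i := val_nonneg _
  have hy0 : 0 ≤ tailE y i := val_nonneg _
  have hz0 : 0 ≤ tailE z i := val_nonneg _
  have hx1 : tailE x i ≤ 1 := val_le_one _
  have hy1 : tailE y i ≤ 1 := val_le_one _
  have hz1 : tailE z i ≤ 1 := val_le_one _
  have h1 : -1 ≤ m := by
    have : (-1 : ℝ) ≤ m := by linarith
    exact_mod_cast this
  have h2 : m ≤ 2 := by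
    have : (m : ℝ) ≤ 2 := by linarith
    exact_mod_cast this
  refine ⟨⟨(m + 1).toNat, by omega⟩, ?_⟩
  have : (((m + 1).toNat : ℤ) : ℝ) = ((m + 1 : ℤ) : ℝ) := by
    rw [Int.toNat_of_nonneg (by omega)]
  simp only [Int.cast_natCast] at this
  simp only [this]
  push_cast
  linarith

theorem block_rel (x y z : ℕ → Bool) (m : ℤ) (h : val z = val x + val y - m) (ℓ : ℕ)
    (e : ℕ → Fin 4)
    (he : ∀ i, tailE x i + tailE y i - tailE z i = ((e i : ℕ) : ℝ) - 1) (i : ℕ) :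
    ∃ q : ℤ, (numE z i ℓ : ℤ) = numE x i ℓ + numE y i ℓ + (e (i + ℓ) : ℕ) - 1 - 2 ^ ℓ * q := by
  obtain ⟨q, hq⟩ := carry_exists x y z m h i
  refine ⟨q, ?_⟩
  have hx := tailE_block x i ℓ
  have hy := tailE_block y i ℓ
  have hz := tailE_block z i ℓ
  have hh := he (i + ℓ)
  rw [hq] at hz
  have : (numE z i ℓ : ℝ)
      = numE x i ℓ + numE y i ℓ + ((e (i + ℓ) : ℕ) : ℝ) - 1 - 2 ^ ℓ * q := by
    linarith
  exact_mod_cast this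

theorem eq_of_mod (ℓ a b : ℕ) (q : ℤ) (ha : a < 2 ^ ℓ) (hb : b < 2 ^ ℓ)
    (h : (a : ℤ) - b = 2 ^ ℓ * q) : a = b := by
  have : b ≡ a [MOD 2 ^ ℓ] := by
    rw [Nat.modEq_iff_dvd]
    push_cast
    exact ⟨q, h⟩
  exact (Nat.ModEq.eq_of_lt_of_lt this hb ha).symm

theorem hBlock_ineq (x y z : ℕ → Bool) (m : ℤ) (h : val z = val x + val y - m)
    (ℓ n : ℕ) (hn : ℓ ≤ n) :
    hBlock ℓ z n ≤ hBlock ℓ y n + (hBlock ℓ x n + 2 / ℓ) ∧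
    hBlock ℓ x n ≤ hBlock ℓ y n + (hBlock ℓ z n + 2 / ℓ) := by
  choose e he using carry_bdd x y z m h
  have hr := block_rel x y z m h ℓ e he
  have h4 : Real.logb 2 (Fintype.card (Fin 4)) = 2 := by
    rw [Fintype.card_fin, show ((4 : ℕ) : ℝ) = 2 ^ (2 : ℕ) by norm_num, Real.logb_pow,
      Real.logb_self_eq_one (by norm_num)]
    norm_num
  rw [hBlock_eq ℓ x n hn, hBlock_eq ℓ y n hn, hBlock_eq ℓ z n hn, ← add_div, ← add_div,
    ← add_div, ← add_div]
  constructor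
  · apply div_le_div_of_nonneg_right _ (by positivity)
    have := entE_le _ (range_ne ℓ n hn) (blkE ℓ z) (blkE ℓ x) (blkE ℓ y) (fun i => e (i + ℓ)) ?_
    · rw [h4] at this; linarith
    intro i _ j _ h1 h2 h3
    rw [blkE_eq_iff] at h1 h2 ⊢
    obtain ⟨q, hq⟩ := hr i
    obtain ⟨r, hs⟩ := hr j
    apply eq_of_mod ℓ _ _ (r - q) (numE_lt _ _ _) (numE_lt _ _ _)
    rw [hq, hs, h1, h2, h3]; ring
  · apply div_le_div_of_nonneg_right _ (by positivity)
    have := entE_le _ (range_ne ℓ n hn) (blkE ℓ x) (blkE ℓ z) (blkE ℓ y) (fun i => e (i + ℓ)) ?_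
    · rw [h4] at this; linarith
    intro i _ j _ h1 h2 h3
    rw [blkE_eq_iff] at h1 h2 ⊢
    obtain ⟨q, hq⟩ := hr i
    obtain ⟨r, hs⟩ := hr j
    apply eq_of_mod ℓ _ _ (q - r) (numE_lt _ _ _) (numE_lt _ _ _)
    rw [h1, h2, h3] at hq
    linarith

theorem bdd_aux (u : ℕ → ℝ) (k : ℕ) (C : ℝ) (h : ∀ n, k ≤ n → 0 ≤ u n ∧ u n ≤ C) :
    IsBoundedUnder (· ≤ ·) atTop u ∧ IsBoundedUnder (· ≥ ·) atTop u := by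
  constructor
  · exact isBoundedUnder_of_eventually_le (a := C)
      (by filter_upwards [eventually_ge_atTop k] with n hn using (h n hn).2)
  · exact isBoundedUnder_of_eventually_ge (a := 0)
      (by filter_upwards [eventually_ge_atTop k] with n hn using (h n hn).1)

theorem liminf_aux (u v w : ℕ → ℝ) (k : ℕ) (C : ℝ)
    (hu : ∀ n, k ≤ n → 0 ≤ u n ∧ u n ≤ C) (hv : ∀ n, k ≤ n → 0 ≤ v n ∧ v n ≤ C)
    (hw : ∀ n, k ≤ n → 0 ≤ w n ∧ w n ≤ C)
    (ε : ℕ → ℝ) (e : ℝ) (hε : Tendsto ε atTop (𝓝 e))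
    (h : ∀ n, k ≤ n → w n ≤ u n + (v n + ε n)) :
    liminf w atTop ≤ limsup u atTop + (liminf v atTop + e) := by
  obtain ⟨hu1, hu2⟩ := bdd_aux u k C hu
  obtain ⟨hv1, hv2⟩ := bdd_aux v k C hv
  obtain ⟨hw1, hw2⟩ := bdd_aux w k C hw
  apply le_of_forall_pos_le_add
  intro δ hδ
  have h1 : ∀ᶠ n in atTop, ε n < e + δ / 3 := hε.eventually_lt_const (by linarith)
  have h2 : ∀ᶠ n in atTop, u n < limsup u atTop + δ / 3 :=
    eventually_lt_of_limsup_lt (by linarith) hu1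
  have h3 : ∃ᶠ n in atTop, v n < liminf v atTop + δ / 3 :=
    frequently_lt_of_liminf_lt hv1.isCoboundedUnder_ge (by linarith)
  apply liminf_le_of_frequently_le _ hw2
  refine (h3.and_eventually (h1.and (h2.and (eventually_ge_atTop k)))).mono ?_
  rintro n ⟨a, b, c, d⟩
  have := h n d
  linarith

theorem lim_bounds (ℓ : ℕ) (x : ℕ → Bool) :
    (0 ≤ liminf (fun n => hBlock ℓ x n) atTop ∧ liminf (fun n => hBlock ℓ x n) atTop ≤ 1) ∧
    (0 ≤ limsup (fun n => hBlock ℓ x n) atTop ∧ limsup (fun n => hBlock ℓ x n) atTop ≤ 1) := by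
  have hb : ∀ n, ℓ ≤ n → 0 ≤ hBlock ℓ x n ∧ hBlock ℓ x n ≤ 1 :=
    fun n hn => ⟨hBlock_nonneg ℓ x n hn, hBlock_le_one ℓ x n hn⟩
  obtain ⟨h1, h2⟩ := bdd_aux _ ℓ 1 hb
  have e0 : ∀ᶠ n in atTop, 0 ≤ hBlock ℓ x n := by
    filter_upwards [eventually_ge_atTop ℓ] with n hn using (hb n hn).1
  have e1 : ∀ᶠ n in atTop, hBlock ℓ x n ≤ 1 := by
    filter_upwards [eventually_ge_atTop ℓ] with n hn using (hb n hn).2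
  refine ⟨⟨?_, ?_⟩, ?_, ?_⟩
  · exact le_liminf_of_le h1.isCoboundedUnder_ge e0
  · exact liminf_le_of_frequently_le e1.frequently h2
  · exact le_limsup_of_frequently_le e0.frequently h1
  · exact limsup_le_of_le h2.isCoboundedUnder_le e1

theorem hLow_le_of_block (x y z : ℕ → Bool)
    (h : ∀ ℓ n, ℓ ≤ n → hBlock ℓ z n ≤ hBlock ℓ y n + (hBlock ℓ x n + 2 / ℓ)) :
    hLow z ≤ hUp y + hLow x := by
  have key : ∀ ℓ : ℕ, liminf (fun n => hBlock ℓ z n) atTop ≤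
      limsup (fun n => hBlock ℓ y n) atTop + (liminf (fun n => hBlock ℓ x n) atTop + 2 / ℓ) := by
    intro ℓ
    have hb : ∀ x n, ℓ ≤ n → 0 ≤ hBlock ℓ x n ∧ hBlock ℓ x n ≤ 1 :=
      fun x n hn => ⟨hBlock_nonneg ℓ x n hn, hBlock_le_one ℓ x n hn⟩
    exact liminf_aux _ _ _ ℓ 1 (hb y) (hb x) (hb z) (fun _ => 2 / (ℓ : ℝ)) _ tendsto_const_nhds
      (fun n hn => h ℓ n hn)
  have := liminf_aux (fun ℓ => limsup (fun n => hBlock ℓ y n) atTop)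
    (fun ℓ => liminf (fun n => hBlock ℓ x n) atTop)
    (fun ℓ => liminf (fun n => hBlock ℓ z n) atTop) 0 1
    (fun ℓ _ => (lim_bounds ℓ y).2) (fun ℓ _ => (lim_bounds ℓ x).1)
    (fun ℓ _ => (lim_bounds ℓ z).1) (fun ℓ => 2 / (ℓ : ℝ)) 0
    (tendsto_const_div_atTop_nhds_zero_nat 2) (fun ℓ _ => key ℓ)
  rw [add_zero] at this
  exact this

theorem hLow_add_subadditive (x y z : ℕ → Bool)
    (hz : val z = Int.fract (val x + val y)) :
    hLow x - hUp y ≤ hLow z ∧ hLow z ≤ hLow x + hUp y := by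
  have h : val z = val x + val y - (⌊val x + val y⌋ : ℤ) := hz
  have hb := hBlock_ineq x y z _ h
  have h1 := hLow_le_of_block x y z (fun ℓ n hn => (hb ℓ n hn).1)
  have h2 := hLow_le_of_block z y x (fun ℓ n hn => (hb ℓ n hn).2)
  constructor <;> linarith
end

section
/- For all x, y, z ∈ B^ℕ such that val(z) equals the fractional part of val(x) + val(y), it holds that h̄(x) − h̄(y) ≤ h̄(z) ≤ h̄(x) + h̄(y). -/
open Filter Topology

namespace HUpAux

/-- number of indices below `N` with the same `A`-value as `i` -/
def cnt {α : Type*} [DecidableEq α] (N : ℕ) (A : ℕ → α) (i : ℕ) : ℕ :=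
  ((Finset.range N).filter (fun j => A j = A i)).card

/-- unnormalised empirical entropy -/
noncomputable def ent {α : Type*} [DecidableEq α] (N : ℕ) (A : ℕ → α) : ℝ :=
  ∑ i ∈ Finset.range N, Real.logb 2 ((N : ℝ) / cnt N A i)

lemma cnt_pos {α : Type*} [DecidableEq α] {N : ℕ} (A : ℕ → α) {i : ℕ} (hi : i < N) :
    0 < cnt N A i :=
  Finset.card_pos.mpr ⟨i, by simp [hi]⟩

lemma cnt_le {α : Type*} [DecidableEq α] (N : ℕ) (A : ℕ → α) (i : ℕ) :
    cnt N A i ≤ N := by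
  unfold cnt
  exact (Finset.card_filter_le _ _).trans (by simp)

lemma ent_nonneg {α : Type*} [DecidableEq α] (N : ℕ) (A : ℕ → α) : 0 ≤ ent N A := by
  unfold ent
  refine Finset.sum_nonneg fun i hi => ?_
  have h1 := cnt_pos A (Finset.mem_range.mp hi)
  have h2 := cnt_le N A i
  apply Real.logb_nonneg (by norm_num)
  rw [le_div_iff₀ (by exact_mod_cast h1)]
  simpa using (by exact_mod_cast h2 : (cnt N A i : ℝ) ≤ N)

lemma sum_fib {α : Type*} [DecidableEq α] [Fintype α] (N : ℕ) (A : ℕ → α) (g : α → ℝ) :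
    ∑ i ∈ Finset.range N, g (A i)
      = ∑ a, (((Finset.range N).filter (fun j => A j = a)).card : ℝ) * g a := by
  rw [← Finset.sum_fiberwise (Finset.range N) A]
  refine Finset.sum_congr rfl fun a _ => ?_
  rw [Finset.sum_congr rfl (g := fun _ => g a)]
  · simp
  · intro i hi
    rw [(Finset.mem_filter.mp hi).2]

lemma sum_card {α : Type*} [DecidableEq α] [Fintype α] (N : ℕ) (A : ℕ → α) :
    ∑ a, (((Finset.range N).filter (fun j => A j = a)).card : ℝ) = N := by
  have := sum_fib N A (fun _ => 1)
  simpa using this.symm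

lemma log_sum_le (N : ℕ) (t : ℕ → ℝ) (ht : ∀ i < N, 0 < t i)
    (hs : ∑ i ∈ Finset.range N, t i ≤ N) :
    ∑ i ∈ Finset.range N, Real.logb 2 (t i) ≤ 0 := by
  have h2 : 0 < Real.log 2 := Real.log_pos (by norm_num)
  have : ∑ i ∈ Finset.range N, Real.log (t i) ≤ 0 := by
    calc _ ≤ ∑ i ∈ Finset.range N, (t i - 1) :=
          Finset.sum_le_sum fun i hi =>
            Real.log_le_sub_one_of_pos (ht i (Finset.mem_range.mp hi))
      _ ≤ 0 := by simp; exact hs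
  simp only [Real.logb]
  rw [← Finset.sum_div]
  exact div_nonpos_of_nonpos_of_nonneg this h2.le

theorem ent_le {α β γ ε : Type*} [DecidableEq α] [DecidableEq β] [DecidableEq γ] [DecidableEq ε]
    [Fintype β] [Fintype γ] [Fintype ε] [Nonempty ε]
    (N : ℕ) (A : ℕ → α) (B : ℕ → β) (C : ℕ → γ) (E : ℕ → ε)
    (hdet : ∀ i j, B i = B j → C i = C j → E i = E j → A i = A j) :
    ent N A ≤ ent N B + ent N C + N * Real.logb 2 (Fintype.card ε) := by
  rcases Nat.eq_zero_or_pos N with hN | hN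
  · subst hN; simp [ent]
  have hNr : (0 : ℝ) < N := by exact_mod_cast hN
  have hK : (0 : ℝ) < Fintype.card ε := by exact_mod_cast Fintype.card_pos
  set K : ℝ := (Fintype.card ε : ℝ) with hKdef
  let D : ℕ → β × γ × ε := fun i => (B i, C i, E i)
  have key := log_sum_le N
    (fun i => (cnt N B i : ℝ) * cnt N C i / (cnt N D i * (N * K))) ?_ ?_
  · have hDA : ∀ i, cnt N D i ≤ cnt N A i := by
      intro i
      apply Finset.card_le_card
      intro j hj
      simp only [Finset.mem_filter, D, Prod.mk.injEq] at hj ⊢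
      exact ⟨hj.1, hdet _ _ hj.2.1 hj.2.2.1 hj.2.2.2⟩
    have : ent N A - (ent N B + ent N C + N * Real.logb 2 K) ≤
        ∑ i ∈ Finset.range N,
          Real.logb 2 ((cnt N B i : ℝ) * cnt N C i / (cnt N D i * (N * K))) := by
      have e : (N : ℝ) * Real.logb 2 K = ∑ i ∈ Finset.range N, Real.logb 2 K := by simp
      rw [e]
      unfold ent
      rw [← Finset.sum_add_distrib, ← Finset.sum_add_distrib, ← Finset.sum_sub_distrib]
      refine Finset.sum_le_sum fun i hi => ?_
      have hi' := Finset.mem_range.mp hi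
      have a0 : (0 : ℝ) < cnt N A i := by exact_mod_cast cnt_pos A hi'
      have b0 : (0 : ℝ) < cnt N B i := by exact_mod_cast cnt_pos B hi'
      have c0 : (0 : ℝ) < cnt N C i := by exact_mod_cast cnt_pos C hi'
      have d0 : (0 : ℝ) < cnt N D i := by exact_mod_cast cnt_pos D hi'
      have hle : Real.logb 2 (cnt N D i) ≤ Real.logb 2 (cnt N A i) :=
        Real.logb_le_logb_of_le (by norm_num) d0 (by exact_mod_cast hDA i)
      rw [Real.logb_div hNr.ne' a0.ne', Real.logb_div hNr.ne' b0.ne',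
        Real.logb_div hNr.ne' c0.ne', Real.logb_div (by positivity) (by positivity),
        Real.logb_mul b0.ne' c0.ne', Real.logb_mul d0.ne' (by positivity),
        Real.logb_mul hNr.ne' hK.ne']
      linarith
    linarith
  · intro i hi
    have b0 : (0 : ℝ) < cnt N B i := by exact_mod_cast cnt_pos B hi
    have c0 : (0 : ℝ) < cnt N C i := by exact_mod_cast cnt_pos C hi
    have d0 : (0 : ℝ) < cnt N D i := by exact_mod_cast cnt_pos D hi
    positivity
  · let nB : β → ℝ := fun b => (((Finset.range N).filter (fun j => B j = b)).card : ℝ)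
    let nC : γ → ℝ := fun b => (((Finset.range N).filter (fun j => C j = b)).card : ℝ)
    let nD : β × γ × ε → ℝ := fun b => (((Finset.range N).filter (fun j => D j = b)).card : ℝ)
    have h := sum_fib N D (fun d => nB d.1 * nC d.2.1 / (nD d * (N * K)))
    have h1 : ∑ i ∈ Finset.range N, (cnt N B i : ℝ) * cnt N C i / (cnt N D i * (N * K))
        = ∑ d, nD d * (nB d.1 * nC d.2.1 / (nD d * (N * K))) := h
    rw [h1]
    have h2 : ∀ d, nD d * (nB d.1 * nC d.2.1 / (nD d * (N * K)))
        ≤ nB d.1 * nC d.2.1 / (N * K) := by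
      intro d
      have hb : 0 ≤ nB d.1 := Nat.cast_nonneg _
      have hc : 0 ≤ nC d.2.1 := Nat.cast_nonneg _
      have hd : 0 ≤ nD d := Nat.cast_nonneg _
      rcases hd.eq_or_lt with h0 | h0
      · rw [← h0]; simp only [zero_mul]; positivity
      · apply le_of_eq; field_simp
    refine (Finset.sum_le_sum fun d _ => h2 d).trans ?_
    rw [← Finset.sum_div, Fintype.sum_prod_type]
    simp only [Fintype.sum_prod_type, Finset.sum_const, Finset.card_univ, nsmul_eq_mul]
    rw [← hKdef]
    have h3 : ∑ b, ∑ c, K * (nB b * nC c) = K * (N * N) := by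
      simp only [← Finset.mul_sum]
      rw [← Finset.sum_mul]
      rw [show ∑ b, nB b = N from sum_card N B, show ∑ c, nC c = N from sum_card N C]
    rw [h3]
    apply le_of_eq
    field_simp

/-- block at position i -/
def blk (ℓ : ℕ) (x : ℕ → Bool) (i : ℕ) : Fin ℓ → Bool := fun j => x (i + j)

lemma occ_eq (ℓ : ℕ) (x : ℕ → Bool) (n : ℕ) (u : Fin ℓ → Bool) :
    occ x n (List.ofFn u) =
      ((Finset.range (n + 1 - ℓ)).filter (fun i => blk ℓ x i = u)).card := by
  unfold occ
  rw [List.length_ofFn]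
  congr 1
  apply Finset.filter_congr
  intro i _
  exact List.ofFn_injective.eq_iff

lemma hBlock_eq (ℓ : ℕ) (x : ℕ → Bool) (n : ℕ) (h : ℓ ≤ n) :
    hBlock ℓ x n = ent (n + 1 - ℓ) (blk ℓ x) / (ℓ * ((n + 1 - ℓ : ℕ) : ℝ)) := by
  have hc : (n : ℝ) - ℓ + 1 = ((n + 1 - ℓ : ℕ) : ℝ) := by
    rw [Nat.cast_sub (by omega)]; push_cast; ring
  have hpos : 0 < n + 1 - ℓ := by omega
  unfold hBlock
  rw [hc]
  simp only [occ_eq]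
  generalize n + 1 - ℓ = N at *
  have hNr : (0 : ℝ) < N := by exact_mod_cast hpos
  have := sum_fib N (blk ℓ x)
    (fun u => Real.logb 2 ((N : ℝ) / (((Finset.range N).filter (fun i => blk ℓ x i = u)).card : ℝ)))
  unfold ent cnt
  rw [this, Finset.mul_sum, Finset.sum_div]
  refine Finset.sum_congr rfl fun u _ => ?_
  rw [← inv_div (N : ℝ), Real.logb_inv]
  rw [inv_div]
  simp only [div_eq_mul_inv, mul_inv]
  ring

lemma hBlock_nonneg (ℓ : ℕ) (x : ℕ → Bool) (n : ℕ) (h : ℓ ≤ n) : 0 ≤ hBlock ℓ x n := by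
  rw [hBlock_eq _ _ _ h]
  have := ent_nonneg (n + 1 - ℓ) (blk ℓ x)
  positivity

lemma hBlock_le_one (ℓ : ℕ) (x : ℕ → Bool) (n : ℕ) (h : ℓ ≤ n) (hl : 1 ≤ ℓ) :
    hBlock ℓ x n ≤ 1 := by
  rw [hBlock_eq _ _ _ h]
  have hpos : 0 < n + 1 - ℓ := by omega
  generalize n + 1 - ℓ = N at *
  have hNr : (0 : ℝ) < N := by exact_mod_cast hpos
  have hlr : (0 : ℝ) < ℓ := by exact_mod_cast hl
  have := ent_le N (blk ℓ x) (fun _ => ()) (fun _ => ()) (blk ℓ x) (fun i j _ _ h => h)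
  have e0 : ent N (fun _ => ()) = 0 := by
    simp [ent, cnt, hNr.ne']
  have e1 : Real.logb 2 (Fintype.card (Fin ℓ → Bool) : ℝ) = ℓ := by
    simp [Real.logb_pow]
  rw [e0, e1] at this
  rw [div_le_one (by positivity)]
  linarith

lemma limsup_aux (f g h e : ℕ → ℝ) (δ : ℝ)
    (hf : ∀ᶠ n in atTop, 0 ≤ f n) (hg : ∀ᶠ n in atTop, 0 ≤ g n ∧ g n ≤ 1)
    (hh : ∀ᶠ n in atTop, 0 ≤ h n ∧ h n ≤ 1)
    (he : Tendsto e atTop (𝓝 δ)) (hle : ∀ᶠ n in atTop, f n ≤ g n + h n + e n) :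
    limsup f atTop ≤ limsup g atTop + limsup h atTop + δ := by
  apply le_of_forall_pos_le_add
  intro η hη
  have bg : IsBoundedUnder (· ≤ ·) atTop g := ⟨1, by
    rw [eventually_map]; filter_upwards [hg] with n hn using hn.2⟩
  have bh : IsBoundedUnder (· ≤ ·) atTop h := ⟨1, by
    rw [eventually_map]; filter_upwards [hh] with n hn using hn.2⟩
  have h1 := eventually_lt_of_limsup_lt (f := atTop) (u := g)
    (b := limsup g atTop + η / 3) (by linarith) bg
  have h2 := eventually_lt_of_limsup_lt (f := atTop) (u := h)
    (b := limsup h atTop + η / 3) (by linarith) bh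
  have h3 : ∀ᶠ n in atTop, e n < δ + η / 3 := he.eventually_lt_const (by linarith)
  have cf : IsCoboundedUnder (· ≤ ·) atTop f :=
    IsBoundedUnder.isCoboundedUnder_le ⟨0, by rw [eventually_map]; exact hf⟩
  apply limsup_le_of_le cf
  filter_upwards [h1, h2, h3, hle] with n a b c d
  linarith

lemma limsup_mem (g : ℕ → ℝ) (hg : ∀ᶠ n in atTop, 0 ≤ g n ∧ g n ≤ 1) :
    0 ≤ limsup g atTop ∧ limsup g atTop ≤ 1 := by
  have bg : IsBoundedUnder (· ≤ ·) atTop g := ⟨1, by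
    rw [eventually_map]; filter_upwards [hg] with n hn using hn.2⟩
  have cf : IsCoboundedUnder (· ≤ ·) atTop g :=
    IsBoundedUnder.isCoboundedUnder_le ⟨0, by
      rw [eventually_map]; filter_upwards [hg] with n hn using hn.1⟩
  constructor
  · apply le_limsup_of_frequently_le _ bg
    exact (hg.mono fun n hn => hn.1).frequently
  · apply limsup_le_of_le cf
    filter_upwards [hg] with n hn using hn.2

lemma hBlock_ev (ℓ : ℕ) (hl : 1 ≤ ℓ) (x : ℕ → Bool) :
    ∀ᶠ n in atTop, 0 ≤ hBlock ℓ x n ∧ hBlock ℓ x n ≤ 1 := by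
  filter_upwards [eventually_ge_atTop ℓ] with n hn
  exact ⟨hBlock_nonneg _ _ _ hn, hBlock_le_one _ _ _ hn hl⟩

/-- If the blocks of `a` are determined by those of `b`, `c` and a symbol from a four-element
alphabet then the entropies are subadditive. -/
theorem hUp_le_of_det (a b c : ℕ → Bool) (E : ℕ → Fin 4)
    (hdet : ∀ ℓ i j, blk ℓ b i = blk ℓ b j → blk ℓ c i = blk ℓ c j → E (i + ℓ) = E (j + ℓ) →
      blk ℓ a i = blk ℓ a j) :
    hUp a ≤ hUp b + hUp c := by
  have main : ∀ ℓ n : ℕ, 1 ≤ ℓ → ℓ ≤ n →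
      hBlock ℓ a n ≤ hBlock ℓ b n + hBlock ℓ c n + 2 / ℓ := by
    intro ℓ n hl hn
    rw [hBlock_eq _ _ _ hn, hBlock_eq _ _ _ hn, hBlock_eq _ _ _ hn]
    have hpos : 0 < n + 1 - ℓ := by omega
    generalize n + 1 - ℓ = N at *
    have hNr : (0 : ℝ) < N := by exact_mod_cast hpos
    have hlr : (0 : ℝ) < ℓ := by exact_mod_cast hl
    have h := ent_le N (blk ℓ a) (blk ℓ b) (blk ℓ c) (fun i => E (i + ℓ)) (hdet ℓ)
    have e1 : Real.logb 2 (Fintype.card (Fin 4) : ℝ) = 2 := by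
      rw [Fintype.card_fin, show ((4 : ℕ) : ℝ) = 2 ^ 2 by norm_num, Real.logb_pow]
      simp
    rw [e1] at h
    have : (2 : ℝ) / ℓ = N * 2 / (ℓ * N) := by field_simp
    rw [this, ← add_div, ← add_div]
    gcongr
  unfold hUp
  have ev : ∀ x : ℕ → Bool, ∀ᶠ ℓ in atTop,
      0 ≤ limsup (fun n => hBlock ℓ x n) atTop ∧ limsup (fun n => hBlock ℓ x n) atTop ≤ 1 := by
    intro x
    filter_upwards [eventually_ge_atTop 1] with ℓ hl
    exact limsup_mem _ (hBlock_ev ℓ hl x)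
  have := limsup_aux (fun ℓ => limsup (fun n => hBlock ℓ a n) atTop)
    (fun ℓ => limsup (fun n => hBlock ℓ b n) atTop)
    (fun ℓ => limsup (fun n => hBlock ℓ c n) atTop) (fun ℓ => 2 / (ℓ : ℝ)) 0
    ((ev a).mono fun _ h => h.1) (ev b) (ev c) (tendsto_const_div_atTop_nhds_zero_nat 2) ?_
  · simpa using this
  · filter_upwards [eventually_ge_atTop 1] with ℓ hl
    apply limsup_aux _ _ _ (fun _ => 2 / (ℓ : ℝ)) _ ((hBlock_ev ℓ hl a).mono fun _ h => h.1)
      (hBlock_ev ℓ hl b) (hBlock_ev ℓ hl c) tendsto_const_nhds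
    filter_upwards [eventually_ge_atTop ℓ] with n hn using main ℓ n hl hn

/-- tail -/
def tl (x : ℕ → Bool) (i : ℕ) : ℕ → Bool := fun n => x (i + n)

/-- bit -/
def bit (x : Bool) : ℤ := if x then 1 else 0

lemma val_summable (x : ℕ → Bool) :
    Summable fun n : ℕ => (if x n then (1 : ℝ) else 0) / 2 ^ (n + 1) := by
  refine Summable.of_nonneg_of_le (fun n => ?_) (fun n => ?_) (summable_geometric_two' 1)
  · split_ifs <;> positivity
  · have : (1 : ℝ) / 2 / 2 ^ n = 1 / 2 ^ (n + 1) := by rw [pow_succ]; field_simp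
    rw [this]
    gcongr
    split_ifs <;> norm_num

lemma val_nonneg (x : ℕ → Bool) : 0 ≤ val x := by
  unfold val
  apply tsum_nonneg
  intro n
  split_ifs <;> positivity

lemma val_le_one (x : ℕ → Bool) : val x ≤ 1 := by
  unfold val
  refine le_of_le_of_eq ?_ (tsum_geometric_two' 1)
  refine Summable.tsum_le_tsum (fun n => ?_) (val_summable x) (summable_geometric_two' 1)
  have : (1 : ℝ) / 2 / 2 ^ n = 1 / 2 ^ (n + 1) := by rw [pow_succ]; field_simp
  rw [this]
  gcongr
  split_ifs <;> norm_num

lemma val_tl (x : ℕ → Bool) (i : ℕ) :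
    2 * val (tl x i) = bit (x i) + val (tl x (i + 1)) := by
  unfold val
  rw [(val_summable (tl x i)).tsum_eq_zero_add, mul_add, ← tsum_mul_left]
  congr 1
  · simp [tl, bit]
    split_ifs <;> norm_num
  · congr 1
    funext n
    have : tl x i (n + 1) = tl x (i + 1) n := by
      simp only [tl]; congr 1; omega
    rw [this, pow_succ _ (n + 1)]
    field_simp

lemma exists_carry (x y z : ℕ → Bool) (hz : val z = Int.fract (val x + val y)) :
    ∃ c : ℕ → ℤ, (∀ i, -1 ≤ c i ∧ c i ≤ 2) ∧
      ∀ i, bit (x i) + bit (y i) - bit (z i) + c (i + 1) = 2 * c i := by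
  have hex : ∀ i, ∃ c : ℤ, val (tl x i) + val (tl y i) - val (tl z i) = c := by
    intro i
    induction i with
    | zero =>
      have e : ∀ w : ℕ → Bool, tl w 0 = w := by intro w; funext n; simp [tl]
      refine ⟨⌊val x + val y⌋, ?_⟩
      rw [e, e, e, hz, Int.fract]; ring
    | succ i ih =>
      obtain ⟨c, hc⟩ := ih
      refine ⟨2 * c - bit (x i) - bit (y i) + bit (z i), ?_⟩
      have h1 := val_tl x i
      have h2 := val_tl y i
      have h3 := val_tl z i
      push_cast
      linarith
  choose c hc using hex
  refine ⟨c, fun i => ?_, fun i => ?_⟩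
  · have h1 := val_nonneg (tl x i)
    have h2 := val_nonneg (tl y i)
    have h3 := val_nonneg (tl z i)
    have h4 := val_le_one (tl x i)
    have h5 := val_le_one (tl y i)
    have h6 := val_le_one (tl z i)
    have := hc i
    constructor
    · have : (-1 : ℝ) ≤ c i := by linarith
      exact_mod_cast this
    · have : (c i : ℝ) ≤ 2 := by linarith
      exact_mod_cast this
  · have h1 := val_tl x i
    have h2 := val_tl y i
    have h3 := val_tl z i
    have h4 := hc i
    have h5 := hc (i + 1)
    have : ((bit (x i) + bit (y i) - bit (z i) + c (i + 1) : ℤ) : ℝ) = (2 * c i : ℤ) := by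
      push_cast
      linarith
    exact_mod_cast this

lemma det_aux (a b d : ℕ → Bool) (c : ℕ → ℤ)
    (hstep : ∀ i j, b i = b j → d i = d j → c (i + 1) = c (j + 1) → a i = a j ∧ c i = c j) :
    ∀ ℓ i j, blk ℓ b i = blk ℓ b j → blk ℓ d i = blk ℓ d j → c (i + ℓ) = c (j + ℓ) →
      blk ℓ a i = blk ℓ a j ∧ c i = c j := by
  intro ℓ
  induction ℓ with
  | zero => intro i j _ _ h; exact ⟨funext fun k => k.elim0, h⟩
  | succ ℓ ih =>
    intro i j hb hd hc
    have tail : ∀ w : ℕ → Bool, blk (ℓ + 1) w i = blk (ℓ + 1) w j →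
        blk ℓ w (i + 1) = blk ℓ w (j + 1) ∧ w i = w j := by
      intro w hw
      constructor
      · funext k
        have := congrFun hw k.succ
        simp only [blk, Fin.val_succ] at this ⊢
        rw [show i + 1 + (k : ℕ) = i + (k + 1) by omega,
          show j + 1 + (k : ℕ) = j + (k + 1) by omega]
        exact this
      · have := congrFun hw 0
        simpa [blk] using this
    obtain ⟨hb1, hb0⟩ := tail b hb
    obtain ⟨hd1, hd0⟩ := tail d hd
    obtain ⟨ha1, hc1⟩ := ih (i + 1) (j + 1) hb1 hd1
      (by rw [show i + 1 + ℓ = i + (ℓ + 1) by omega, show j + 1 + ℓ = j + (ℓ + 1) by omega]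
          exact hc)
    obtain ⟨ha0, hc0⟩ := hstep i j hb0 hd0 hc1
    refine ⟨?_, hc0⟩
    funext k
    refine Fin.cases ?_ (fun k => ?_) k
    · simpa [blk] using ha0
    · have := congrFun ha1 k
      simp only [blk, Fin.val_succ] at this ⊢
      rw [show i + 1 + (k : ℕ) = i + (k + 1) by omega,
        show j + 1 + (k : ℕ) = j + (k + 1) by omega] at this
      exact this

lemma hUp_le (a b d : ℕ → Bool) (c : ℕ → ℤ) (hcb : ∀ i, -1 ≤ c i ∧ c i ≤ 2)
    (hstep : ∀ i j, b i = b j → d i = d j → c (i + 1) = c (j + 1) → a i = a j ∧ c i = c j) :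
    hUp a ≤ hUp b + hUp d := by
  refine hUp_le_of_det a b d
    (fun i => ⟨(c i + 1).toNat, by have := hcb i; omega⟩) ?_
  intro ℓ i j hb hd hE
  refine (det_aux a b d c hstep ℓ i j hb hd ?_).1
  have := congrArg Fin.val hE
  simp only at this
  have h1 := hcb (i + ℓ)
  have h2 := hcb (j + ℓ)
  omega

end HUpAux

theorem hUp_add_subadditive (x y z : ℕ → Bool)
    (hz : val z = Int.fract (val x + val y)) :
    hUp x - hUp y ≤ hUp z ∧ hUp z ≤ hUp x + hUp y := by
  obtain ⟨c, hcb, hc⟩ := HUpAux.exists_carry x y z hz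
  have hbit : ∀ p q : Bool, (HUpAux.bit p = 0 ∨ HUpAux.bit p = 1) ∧ (HUpAux.bit p = HUpAux.bit q → p = q) := by
    intro p q; cases p <;> cases q <;> simp [HUpAux.bit]
  constructor
  · have := HUpAux.hUp_le x z y c hcb (by
      intro i j h1 h2 h3
      have hi := hc i
      have hj := hc j
      rw [h1, h2, h3] at hi
      have k1 := hbit (x i) (x j)
      have k2 := hbit (x j) (x i)
      have : HUpAux.bit (x i) = HUpAux.bit (x j) := by omega
      exact ⟨k1.2 this, by omega⟩)
    linarith
  · exact HUpAux.hUp_le z x y c hcb (by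
      intro i j h1 h2 h3
      have hi := hc i
      have hj := hc j
      rw [h1, h2, h3] at hi
      have k1 := hbit (z i) (z j)
      have k2 := hbit (z j) (z i)
      have : HUpAux.bit (z i) = HUpAux.bit (z j) := by omega
      exact ⟨k1.2 this, by omega⟩)
end

section
/- For all x, y, z ∈ B^ℕ such that val(z) equals the fractional part of val(x) + val(y): if h̲(x) = 1 and h̄(y) = 0, then h̲(z) = 1. -/
open Filter Topology

namespace EntAux

/-- number of indices below `N` in the same class as `i`-value `a`. -/
def cnt {α : Type*} [DecidableEq α] (N : ℕ) (W : ℕ → α) (a : α) : ℕ :=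
  ((Finset.range N).filter (fun i => W i = a)).card

lemma cnt_pos {α : Type*} [DecidableEq α] {N : ℕ} (W : ℕ → α) {i : ℕ}
    (hi : i ∈ Finset.range N) : 0 < cnt N W (W i) := by
  apply Finset.card_pos.2
  exact ⟨i, by simpa using hi⟩

lemma sum_cnt {α : Type*} [DecidableEq α] [Fintype α] (N : ℕ) (W : ℕ → α) (g : α → ℝ) :
    ∑ a, (cnt N W a : ℝ) * g a = ∑ i ∈ Finset.range N, g (W i) := by
  rw [← Finset.sum_fiberwise (Finset.range N) W]
  refine Finset.sum_congr rfl fun a _ => ?_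
  rw [Finset.sum_congr rfl (g := fun _ => g a)]
  · simp [cnt]
  · intro i hi
    rw [(Finset.mem_filter.1 hi).2]

lemma sum_cnt_one {α : Type*} [DecidableEq α] [Fintype α] (N : ℕ) (W : ℕ → α) :
    ∑ a, (cnt N W a : ℝ) = N := by
  have := sum_cnt N W (fun _ => 1)
  simpa using this

lemma gibbs {α : Type*} [DecidableEq α] [Fintype α] (N : ℕ) (W : ℕ → α) (q : α → ℝ)
    (hq0 : ∀ a, 0 ≤ q a) (hq : ∀ i ∈ Finset.range N, 0 < q (W i)) (hs : ∑ a, q a ≤ N) :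
    ∑ i ∈ Finset.range N, Real.log (q (W i) / cnt N W (W i)) ≤ 0 := by
  have h1 : ∑ i ∈ Finset.range N, Real.log (q (W i) / cnt N W (W i)) ≤
      ∑ i ∈ Finset.range N, (q (W i) / cnt N W (W i) - 1) := by
    refine Finset.sum_le_sum fun i hi => ?_
    apply Real.log_le_sub_one_of_pos
    have := cnt_pos W hi
    have := hq i hi
    positivity
  have h2 := sum_cnt N W (fun a => q a / cnt N W a)
  have h3 : ∑ a, (cnt N W a : ℝ) * (q a / cnt N W a) ≤ ∑ a, q a := by
    refine Finset.sum_le_sum fun a _ => ?_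
    by_cases h : (cnt N W a : ℝ) = 0
    · simp [h, hq0]
    · rw [mul_div_cancel₀ _ h]
  rw [Finset.sum_sub_distrib, ← h2] at h1
  simp at h1
  linarith

/-- The unnormalised entropy. -/
noncomputable def ent {α : Type*} [DecidableEq α] (N : ℕ) (W : ℕ → α) : ℝ :=
  ∑ i ∈ Finset.range N, Real.log (N / cnt N W (W i))

lemma cnt_le {α : Type*} [DecidableEq α] (N : ℕ) (W : ℕ → α) (a : α) : cnt N W a ≤ N := by
  simpa [cnt] using Finset.card_filter_le (Finset.range N) (fun i => W i = a)

lemma ent_nonneg {α : Type*} [DecidableEq α] (N : ℕ) (W : ℕ → α) : 0 ≤ ent N W := by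
  refine Finset.sum_nonneg fun i hi => Real.log_nonneg ?_
  have := cnt_pos W hi
  rw [one_le_div (by positivity)]
  exact_mod_cast cnt_le N W _

lemma ent_le {α : Type*} [DecidableEq α] [Fintype α] (N : ℕ) (W : ℕ → α) :
    ent N W ≤ N * Real.log (Fintype.card α) := by
  rcases Nat.eq_zero_or_pos N with rfl | hN
  · simp [ent]
  have : Nonempty α := ⟨W 0⟩
  have hc : 0 < Fintype.card α := Fintype.card_pos
  have := gibbs N W (fun _ => N / Fintype.card α) (fun _ => by positivity)
    (fun _ _ => by positivity) (by simp; field_simp; rfl)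
  have h2 : ∀ i ∈ Finset.range N, Real.log ((N : ℝ) / Fintype.card α / cnt N W (W i)) =
      Real.log (N / cnt N W (W i)) - Real.log (Fintype.card α) := by
    intro i hi
    have := cnt_pos W hi
    rw [div_right_comm, Real.log_div (by positivity) (by positivity)]
  rw [Finset.sum_congr rfl h2, Finset.sum_sub_distrib] at this
  simp at this
  simp only [ent]
  linarith

lemma ent_sub {α β γ δ : Type*} [DecidableEq α] [DecidableEq β] [DecidableEq γ] [DecidableEq δ]
    [Fintype β] [Fintype γ] [Fintype δ] (N : ℕ) (A : ℕ → α) (B : ℕ → β) (C : ℕ → γ) (D : ℕ → δ)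
    (h : ∀ i j, B i = B j → C i = C j → D i = D j → A i = A j) :
    ent N A ≤ ent N B + ent N C + N * Real.log (Fintype.card δ) := by
  rcases Nat.eq_zero_or_pos N with rfl | hN
  · simp [ent]
  have : Nonempty δ := ⟨D 0⟩
  have hc : 0 < Fintype.card δ := Fintype.card_pos
  set W : ℕ → β × γ × δ := fun i => (B i, C i, D i) with hW
  have key := gibbs N W (fun w => cnt N B w.1 * cnt N C w.2.1 / (N * Fintype.card δ))
    (fun _ => by positivity)
    (fun i hi => by
      have := cnt_pos B hi
      have := cnt_pos C hi
      simp only [hW]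
      positivity)
    (by
      simp only [Fintype.sum_prod_type, Finset.sum_const, Finset.card_univ, nsmul_eq_mul]
      have : ∀ b : β, ∑ c : γ, (Fintype.card δ : ℝ) * ((cnt N B b : ℝ) * cnt N C c /
          (N * Fintype.card δ)) = cnt N B b := by
        intro b
        have : ∀ c : γ, (Fintype.card δ : ℝ) * ((cnt N B b : ℝ) * cnt N C c /
          (N * Fintype.card δ)) = cnt N C c * (cnt N B b / N) := by
          intro c; field_simp
        simp only [this]
        rw [← Finset.sum_mul, sum_cnt_one]
        field_simp
      simp only [this]
      rw [sum_cnt_one])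
  have h2 : ∀ i ∈ Finset.range N, Real.log (N / cnt N A (A i)) ≤
      Real.log (((cnt N B (W i).1 : ℝ) * cnt N C (W i).2.1 / (N * Fintype.card δ)) /
        cnt N W (W i)) + Real.log (N / cnt N B (B i)) + Real.log (N / cnt N C (C i))
        + Real.log (Fintype.card δ) := by
    intro i hi
    have hA := cnt_pos A hi
    have hB := cnt_pos B hi
    have hC := cnt_pos C hi
    have hWi := cnt_pos W hi
    have hle : cnt N W (W i) ≤ cnt N A (A i) := by
      apply Finset.card_le_card
      intro j hj
      simp only [Finset.mem_filter, hW, Prod.mk.injEq] at hj ⊢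
      exact ⟨hj.1, h _ _ hj.2.1 hj.2.2.1 hj.2.2.2⟩
    have hle' : Real.log (cnt N W (W i)) ≤ Real.log (cnt N A (A i)) :=
      Real.log_le_log (by positivity) (by exact_mod_cast hle)
    have e1 : (W i).1 = B i := rfl
    have e2 : (W i).2.1 = C i := rfl
    rw [e1, e2]
    rw [Real.log_div (by positivity) (by positivity), Real.log_div (by positivity) (by positivity),
      Real.log_div (by positivity) (by positivity), Real.log_div (by positivity) (by positivity),
      Real.log_div (by positivity) (by positivity), Real.log_mul (by positivity) (by positivity),
      Real.log_mul (by positivity) (by positivity)]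
    linarith
  have h3 := Finset.sum_le_sum h2
  simp only [Finset.sum_add_distrib, Finset.sum_const, Finset.card_range, nsmul_eq_mul] at h3
  simp only [ent]
  linarith

/-- block of length `ℓ` at position `i`. -/
def blk (ℓ : ℕ) (x : ℕ → Bool) (i : ℕ) : Fin ℓ → Bool := fun j => x (i + j)

lemma occ_eq (ℓ : ℕ) (x : ℕ → Bool) (n : ℕ) (u : Fin ℓ → Bool) :
    occ x n (List.ofFn u) = cnt (n + 1 - ℓ) (blk ℓ x) u := by
  unfold occ cnt
  rw [List.length_ofFn]
  congr 1
  refine Finset.filter_congr fun i _ => ?_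
  unfold factor
  exact List.ofFn_injective.eq_iff

lemma hBlock_eq (ℓ : ℕ) (x : ℕ → Bool) (n : ℕ) (hn : ℓ ≤ n) :
    hBlock ℓ x n = ent (n + 1 - ℓ) (blk ℓ x) / (ℓ * (n + 1 - ℓ : ℕ) * Real.log 2) := by
  have hN : ((n : ℝ) - ℓ + 1) = ((n + 1 - ℓ : ℕ) : ℝ) := by
    rw [Nat.cast_sub (by omega)]; push_cast; ring
  unfold hBlock
  simp only [occ_eq, hN]
  have hpos : 0 < n + 1 - ℓ := by omega
  generalize n + 1 - ℓ = N at *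
  have := sum_cnt N (blk ℓ x)
    (fun a => Real.logb 2 ((cnt N (blk ℓ x) a : ℝ) / N) / N)
  have e : ∀ a, (cnt N (blk ℓ x) a : ℝ) / N * Real.logb 2 ((cnt N (blk ℓ x) a : ℝ) / N)
     = (cnt N (blk ℓ x) a : ℝ) * (Real.logb 2 ((cnt N (blk ℓ x) a : ℝ) / N) / N) := by
    intro a; ring
  simp only [e]
  rw [this]
  unfold ent
  rw [Finset.sum_div, Finset.mul_sum]
  refine Finset.sum_congr rfl fun i _ => ?_
  have : Real.log ((N : ℝ) / cnt N (blk ℓ x) (blk ℓ x i)) =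
      - Real.log ((cnt N (blk ℓ x) (blk ℓ x i) : ℝ) / N) := by
    rw [← Real.log_inv, inv_div]
  rw [this, Real.logb]
  ring

lemma hBlock_nonneg (ℓ : ℕ) (x : ℕ → Bool) (n : ℕ) (hn : ℓ ≤ n) : 0 ≤ hBlock ℓ x n := by
  rw [hBlock_eq ℓ x n hn]
  have := ent_nonneg (n + 1 - ℓ) (blk ℓ x)
  have := Real.log_pos one_lt_two
  positivity

lemma hBlock_le_one (ℓ : ℕ) (x : ℕ → Bool) (n : ℕ) (hn : ℓ ≤ n) : hBlock ℓ x n ≤ 1 := by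
  rw [hBlock_eq ℓ x n hn]
  have h := ent_le (n + 1 - ℓ) (blk ℓ x)
  have := Real.log_pos one_lt_two
  apply div_le_one_of_le₀ _ (by positivity)
  refine h.trans (le_of_eq ?_)
  simp
  ring

/-- value of a tail -/
noncomputable def tl (x : ℕ → Bool) (i : ℕ) : ℝ := val (fun n => x (i + n))

/-- digit -/
def dg (b : Bool) : ℤ := if b then 1 else 0

lemma val_summable (x : ℕ → Bool) :
    Summable (fun n : ℕ => (if x n then (1 : ℝ) else 0) / 2 ^ (n + 1)) := by
  refine Summable.of_nonneg_of_le (fun n => ?_) (fun n => ?_) (summable_geometric_two' 1)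
  · split_ifs <;> positivity
  · have : (1 : ℝ) / 2 / 2 ^ n = 1 / 2 ^ (n + 1) := by rw [pow_succ]; field_simp
    rw [this]
    gcongr
    split_ifs <;> norm_num

lemma val_nonneg (x : ℕ → Bool) : 0 ≤ val x :=
  tsum_nonneg fun n => by split_ifs <;> positivity

lemma val_le_one (x : ℕ → Bool) : val x ≤ 1 := by
  rw [← tsum_geometric_two' (1 : ℝ)]
  refine (val_summable x).tsum_le_tsum (fun n => ?_) (summable_geometric_two' 1)
  have : (1 : ℝ) / 2 / 2 ^ n = 1 / 2 ^ (n + 1) := by rw [pow_succ]; field_simp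
  rw [this]
  gcongr
  split_ifs <;> norm_num

lemma tl_succ (x : ℕ → Bool) (i : ℕ) : 2 * tl x i = dg (x i) + tl x (i + 1) := by
  unfold tl
  conv_lhs => rw [val, (val_summable _).tsum_eq_zero_add]
  rw [val, mul_add, ← tsum_mul_left]
  congr 1
  · simp [dg]; ring
  · refine tsum_congr fun n => ?_
    rw [show i + (n + 1) = i + 1 + n by ring, pow_succ]
    field_simp

lemma exists_carry (x y z : ℕ → Bool) (hz : val z = Int.fract (val x + val y)) :
    ∃ d : ℕ → ℤ, (∀ i, d i ∈ Finset.Icc (-1 : ℤ) 2) ∧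
      ∀ i, 2 * d i = dg (x i) + dg (y i) - dg (z i) + d (i + 1) := by
  have h : ∀ i, ∃ d : ℤ, (d : ℝ) = tl x i + tl y i - tl z i := by
    intro i
    induction i with
    | zero =>
      refine ⟨⌊val x + val y⌋, ?_⟩
      have := Int.self_sub_floor (val x + val y)
      simp only [tl, zero_add]
      linarith
    | succ i ih =>
      obtain ⟨d, hd⟩ := ih
      refine ⟨2 * d - dg (x i) - dg (y i) + dg (z i), ?_⟩
      have := tl_succ x i
      have := tl_succ y i
      have := tl_succ z i
      push_cast
      linarith
  choose d hd using h
  refine ⟨d, fun i => ?_, fun i => ?_⟩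
  · have h1 := val_nonneg (fun n => x (i + n))
    have h2 := val_nonneg (fun n => y (i + n))
    have h3 := val_nonneg (fun n => z (i + n))
    have h4 := val_le_one (fun n => x (i + n))
    have h5 := val_le_one (fun n => y (i + n))
    have h6 := val_le_one (fun n => z (i + n))
    have h7 := hd i
    simp only [tl] at h7
    rw [Finset.mem_Icc]
    constructor
    · have : (-1 : ℝ) ≤ d i := by linarith
      exact_mod_cast this
    · have : (d i : ℝ) ≤ 2 := by linarith
      exact_mod_cast this
  · have := tl_succ x i
    have := tl_succ y i
    have := tl_succ z i
    have h0 := hd i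
    have h1 := hd (i + 1)
    have : (2 : ℝ) * d i = dg (x i) + dg (y i) - dg (z i) + d (i + 1) := by linarith
    exact_mod_cast this

lemma determined (x y z : ℕ → Bool) (d : ℕ → ℤ)
    (hd : ∀ i, 2 * d i = dg (x i) + dg (y i) - dg (z i) + d (i + 1)) (ℓ i j : ℕ)
    (hy : blk ℓ y i = blk ℓ y j) (hz : blk ℓ z i = blk ℓ z j) (hD : d (i + ℓ) = d (j + ℓ)) :
    blk ℓ x i = blk ℓ x j := by
  have step : ∀ k < ℓ, d (i + k + 1) = d (j + k + 1) →
      x (i + k) = x (j + k) ∧ d (i + k) = d (j + k) := by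
    intro k hk h
    have h1 := hd (i + k)
    have h2 := hd (j + k)
    have ey : y (i + k) = y (j + k) := congrFun hy ⟨k, hk⟩
    have ez : z (i + k) = z (j + k) := congrFun hz ⟨k, hk⟩
    rw [ey, ez, h] at h1
    have hx : x (i + k) = x (j + k) := by
      cases e1 : x (i + k) <;> cases e2 : x (j + k) <;> simp [e1, e2, dg] at h1 h2 ⊢ <;> omega
    refine ⟨hx, ?_⟩
    rw [hx] at h1
    omega
  have hall : ∀ m ≤ ℓ, d (i + (ℓ - m)) = d (j + (ℓ - m)) := by
    intro m
    induction m with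
    | zero => intro _; simpa using hD
    | succ m ih =>
      intro hm
      have := ih (by omega)
      refine (step (ℓ - (m + 1)) (by omega) ?_).2
      rw [show i + (ℓ - (m + 1)) + 1 = i + (ℓ - m) by omega,
        show j + (ℓ - (m + 1)) + 1 = j + (ℓ - m) by omega]
      exact this
  funext k
  refine (step k k.2 ?_).1
  have := hall (ℓ - (k + 1)) (by omega)
  have hk := k.2
  rw [show ℓ - (ℓ - ((k : ℕ) + 1)) = k + 1 by omega] at this
  exact this

lemma hBlock_le (x y z : ℕ → Bool) (hz : val z = Int.fract (val x + val y)) (ℓ n : ℕ)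
    (hℓ : 1 ≤ ℓ) (hn : ℓ ≤ n) :
    hBlock ℓ x n ≤ hBlock ℓ y n + hBlock ℓ z n + 2 / ℓ := by
  obtain ⟨d, hm, hd⟩ := exists_carry x y z hz
  have key := ent_sub (n + 1 - ℓ) (blk ℓ x) (blk ℓ y) (blk ℓ z)
    (fun i => (⟨d (i + ℓ), hm _⟩ : Finset.Icc (-1 : ℤ) 2))
    (fun i j h1 h2 h3 => determined x y z d hd ℓ i j h1 h2 (congrArg Subtype.val h3))
  have hc : Fintype.card (Finset.Icc (-1 : ℤ) 2) = 4 := by simp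
  rw [hc] at key
  have h4 : Real.log ((4 : ℕ) : ℝ) = 2 * Real.log 2 := by
    rw [show ((4 : ℕ) : ℝ) = 2 ^ 2 by norm_num, Real.log_pow]; norm_num
  rw [h4] at key
  rw [hBlock_eq _ _ _ hn, hBlock_eq _ _ _ hn, hBlock_eq _ _ _ hn]
  have hN : 0 < n + 1 - ℓ := by omega
  generalize n + 1 - ℓ = N at *
  have hl := Real.log_pos one_lt_two
  have : (2 : ℝ) / ℓ = N * (2 * Real.log 2) / (ℓ * N * Real.log 2) := by
    field_simp
  rw [this, ← add_div, ← add_div]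
  gcongr

lemma ev (ℓ : ℕ) (x : ℕ → Bool) : ∀ᶠ n in atTop, hBlock ℓ x n ∈ Set.Icc (0 : ℝ) 1 := by
  filter_upwards [eventually_ge_atTop ℓ] with n hn
  exact ⟨hBlock_nonneg ℓ x n hn, hBlock_le_one ℓ x n hn⟩

lemma bddA {f : ℕ → ℝ} (h : ∀ᶠ n in atTop, f n ∈ Set.Icc (0 : ℝ) 1) :
    atTop.IsBoundedUnder (· ≤ ·) f := ⟨1, by simpa using h.mono fun _ h => h.2⟩

lemma bddB {f : ℕ → ℝ} (h : ∀ᶠ n in atTop, f n ∈ Set.Icc (0 : ℝ) 1) :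
    atTop.IsBoundedUnder (· ≥ ·) f := ⟨0, by simpa using h.mono fun _ h => h.1⟩

lemma liminf_mem {f : ℕ → ℝ} (h : ∀ᶠ n in atTop, f n ∈ Set.Icc (0 : ℝ) 1) :
    atTop.liminf f ∈ Set.Icc (0 : ℝ) 1 := by
  constructor
  · exact le_liminf_of_le (bddA h).isCoboundedUnder_ge (h.mono fun _ h => h.1)
  · exact liminf_le_of_frequently_le (h.mono fun _ h => h.2).frequently (bddB h)

lemma limsup_mem {f : ℕ → ℝ} (h : ∀ᶠ n in atTop, f n ∈ Set.Icc (0 : ℝ) 1) :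
    atTop.limsup f ∈ Set.Icc (0 : ℝ) 1 := by
  constructor
  · exact le_limsup_of_frequently_le (h.mono fun _ h => h.1).frequently (bddA h)
  · exact limsup_le_of_le (bddB h).isCoboundedUnder_le (h.mono fun _ h => h.2)

end EntAux

open EntAux

theorem hLow_add_eq_one_of_hLow_eq_one_of_hUp_eq_zero (x y z : ℕ → Bool)
    (hz : val z = Int.fract (val x + val y))
    (hx : hLow x = 1) (hy : hUp y = 0) :
    hLow z = 1 := by
  have claim : ∀ ℓ ≥ 1, (atTop.liminf fun n => hBlock ℓ x n) ≤
      (atTop.limsup fun n => hBlock ℓ y n) + (atTop.liminf fun n => hBlock ℓ z n) + 2 / ℓ := by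
    intro ℓ hℓ
    refine le_of_forall_pos_le_add fun ε hε => ?_
    have h1 := eventually_lt_of_lt_liminf
      (b := (atTop.liminf fun n => hBlock ℓ x n) - ε / 2) (by linarith) (bddB (ev ℓ x))
    have h2 := eventually_lt_of_limsup_lt
      (b := (atTop.limsup fun n => hBlock ℓ y n) + ε / 2) (by linarith) (bddA (ev ℓ y))
    have h3 : (atTop.liminf fun n => hBlock ℓ x n) - (atTop.limsup fun n => hBlock ℓ y n)
        - 2 / ℓ - ε ≤ atTop.liminf fun n => hBlock ℓ z n := by
      refine le_liminf_of_le (bddA (ev ℓ z)).isCoboundedUnder_ge ?_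
      filter_upwards [h1, h2, eventually_ge_atTop ℓ] with n h1 h2 hn
      have := hBlock_le x y z hz ℓ n hℓ hn
      linarith
    linarith
  have mx : ∀ᶠ ℓ in atTop, (atTop.liminf fun n => hBlock ℓ x n) ∈ Set.Icc (0 : ℝ) 1 :=
    Eventually.of_forall fun ℓ => liminf_mem (ev ℓ x)
  have my : ∀ᶠ ℓ in atTop, (atTop.limsup fun n => hBlock ℓ y n) ∈ Set.Icc (0 : ℝ) 1 :=
    Eventually.of_forall fun ℓ => limsup_mem (ev ℓ y)
  have mz : ∀ᶠ ℓ in atTop, (atTop.liminf fun n => hBlock ℓ z n) ∈ Set.Icc (0 : ℝ) 1 :=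
    Eventually.of_forall fun ℓ => liminf_mem (ev ℓ z)
  unfold hLow at hx ⊢
  unfold hUp at hy
  refine le_antisymm (liminf_mem mz).2 ?_
  refine le_of_forall_pos_le_add fun ε hε => ?_
  rw [← sub_le_iff_le_add]
  have h1 := eventually_lt_of_lt_liminf (b := 1 - ε / 3) (by rw [hx]; linarith) (bddB mx)
  have h2 := eventually_lt_of_limsup_lt (b := ε / 3) (by rw [hy]; linarith) (bddA my)
  have h3 := (tendsto_const_div_atTop_nhds_zero_nat (2 : ℝ)).eventually_lt_const
    (show (0 : ℝ) < ε / 3 by linarith)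
  refine le_liminf_of_le (bddA mz).isCoboundedUnder_ge ?_
  filter_upwards [h1, h2, h3, eventually_ge_atTop 1] with ℓ h1 h2 h3 hℓ
  have := claim ℓ hℓ
  linarith
end

section
/- For every x ∈ B^ℕ, the limit lim_{ℓ→∞} liminf_{n→∞} Hc^{n,ℓ}(x) exists and equals h̲(x). -/
open Filter Topology

/-- A purely real-analytic lemma on double sequences. -/
theorem abstract_limit (D : ℕ → ℕ → ℝ) (h0 : ∀ l m, 0 ≤ D l m) (h1 : ∀ l m, D l m ≤ 1)
    (hs : ∀ l, ∀ ε > 0, ∀ᶠ m in atTop, D (l + 1) m ≤ D l m + ε) :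
    ∃ c : ℝ, Tendsto (fun l => atTop.liminf fun m => D l m) atTop (𝓝 c) ∧
      Tendsto (fun l : ℕ => atTop.liminf fun m => (∑ k ∈ Finset.range l, D k m) / (l : ℝ))
        atTop (𝓝 c) := by
  have bb : ∀ l, IsBoundedUnder (· ≥ ·) atTop (fun m => D l m) :=
    fun l => isBoundedUnder_of ⟨0, fun m => h0 l m⟩
  have ba : ∀ l, IsBoundedUnder (· ≤ ·) atTop (fun m => D l m) :=
    fun l => isBoundedUnder_of ⟨1, fun m => h1 l m⟩
  have hM : ∀ k j, k ≤ j → ∀ ε > 0, ∀ᶠ m in atTop, D j m ≤ D k m + ε := by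
    intro k j hkj
    induction j, hkj using Nat.le_induction with
    | base => intro ε hε; exact Eventually.of_forall fun m => by linarith
    | succ j hj ih =>
      intro ε hε
      filter_upwards [ih (ε / 2) (by positivity), hs j (ε / 2) (by positivity)] with m h2 h3
      linarith
  set C : ℕ → ℝ := fun l => atTop.liminf fun m => D l m with hC
  have hC0 : ∀ l, 0 ≤ C l := fun l =>
    le_liminf_of_le (ba l).isCoboundedUnder_ge (Eventually.of_forall fun m => h0 l m)
  have hanti : Antitone C := by
    apply antitone_nat_of_succ_le
    intro l
    apply le_of_forall_gt_imp_ge_of_dense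
    intro y hy
    obtain ⟨z, hz1, hz2⟩ := exists_between hy
    have hf : ∃ᶠ m in atTop, D l m < z := frequently_lt_of_liminf_lt (ba l).isCoboundedUnder_ge hz1
    refine liminf_le_of_frequently_le ?_ (bb _)
    refine (hf.and_eventually (hs l (y - z) (by linarith))).mono ?_
    rintro m ⟨h2, h3⟩
    linarith
  have hbdd : BddBelow (Set.range C) := ⟨0, by rintro _ ⟨l, rfl⟩; exact hC0 l⟩
  refine ⟨⨅ l, C l, tendsto_atTop_ciInf hanti hbdd, ?_⟩
  set c := ⨅ l, C l with hc
  have S0 : ∀ l m, 0 ≤ (∑ k ∈ Finset.range l, D k m) / (l : ℝ) := fun l m =>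
    div_nonneg (Finset.sum_nonneg fun k _ => h0 k m) (Nat.cast_nonneg _)
  have S1 : ∀ l m, (∑ k ∈ Finset.range l, D k m) / (l : ℝ) ≤ 1 := by
    intro l m
    apply div_le_one_of_le₀ _ (Nat.cast_nonneg _)
    refine (Finset.sum_le_sum fun k _ => h1 k m).trans ?_
    simp
  have Sb : ∀ l : ℕ, IsBoundedUnder (· ≥ ·) atTop
      (fun m => (∑ k ∈ Finset.range l, D k m) / (l : ℝ)) :=
    fun l => isBoundedUnder_of ⟨0, fun m => S0 l m⟩
  have Sa : ∀ l : ℕ, IsBoundedUnder (· ≤ ·) atTop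
      (fun m => (∑ k ∈ Finset.range l, D k m) / (l : ℝ)) :=
    fun l => isBoundedUnder_of ⟨1, fun m => S1 l m⟩
  rw [tendsto_order]
  constructor
  · intro a ha
    filter_upwards [eventually_ge_atTop 1] with l hl
    have hl' : (0 : ℝ) < l := by exact_mod_cast hl
    obtain ⟨y, hy1, hy2⟩ := exists_between ha
    refine lt_of_lt_of_le hy1 (le_liminf_of_le (Sa l).isCoboundedUnder_ge ?_)
    have : ∀ᶠ m in atTop, ∀ k ∈ Finset.range l, y < D k m := by
      rw [Filter.eventually_all_finset]
      intro k _
      exact eventually_lt_of_lt_liminf (lt_of_lt_of_le hy2 (ciInf_le hbdd k)) (bb k)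
    filter_upwards [this] with m hm
    rw [le_div_iff₀ hl']
    calc y * l = ∑ k ∈ Finset.range l, y := by simp [mul_comm]
      _ ≤ _ := Finset.sum_le_sum fun k hk => (hm k hk).le
  · intro a ha
    obtain ⟨k, hk⟩ := exists_lt_of_ciInf_lt ha
    obtain ⟨y, hy1, hy2⟩ := exists_between hk
    have hy0 : 0 ≤ y := (hC0 k).trans hy1.le
    have ht : Tendsto (fun l : ℕ => y + (k : ℝ) / (l : ℝ)) atTop (𝓝 (y + 0)) :=
      tendsto_const_nhds.add (tendsto_const_div_atTop_nhds_zero_nat _)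
    rw [add_zero] at ht
    filter_upwards [eventually_ge_atTop 1, eventually_ge_atTop k,
      ht.eventually_lt_const hy2] with l hl hkl hlt
    have hl' : (0 : ℝ) < l := by exact_mod_cast hl
    refine lt_of_le_of_lt (liminf_le_of_frequently_le ?_ (Sb l)) hlt
    obtain ⟨z, hz1, hz2⟩ := exists_between hy1
    have hf : ∃ᶠ m in atTop, D k m < z := frequently_lt_of_liminf_lt (ba k).isCoboundedUnder_ge hz1
    have he : ∀ᶠ m in atTop, ∀ j ∈ Finset.Ico k l, D j m ≤ D k m + (y - z) := by
      rw [Filter.eventually_all_finset]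
      intro j hj
      exact hM k j (Finset.mem_Ico.1 hj).1 _ (by linarith)
    refine (hf.and_eventually he).mono ?_
    rintro m ⟨h2, h3⟩
    rw [div_le_iff₀ hl', add_mul, div_mul_cancel₀ _ hl'.ne',
      ← Finset.sum_range_add_sum_Ico _ hkl]
    have e1 : ∑ j ∈ Finset.range k, D j m ≤ k := by
      refine (Finset.sum_le_sum fun j _ => h1 j m).trans ?_
      simp
    have e2 : ∑ j ∈ Finset.Ico k l, D j m ≤ y * l := by
      calc ∑ j ∈ Finset.Ico k l, D j m ≤ ∑ j ∈ Finset.Ico k l, y :=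
            Finset.sum_le_sum fun j hj => by linarith [h3 j hj]
        _ = y * ((l - k : ℕ) : ℝ) := by simp [mul_comm]
        _ ≤ y * l := by gcongr; omega
    linarith

/-- Log-sum inequality, two terms. -/
theorem log_sum_two {a b c d : ℝ} (ha : 0 ≤ a) (hc : 0 ≤ c) (hab : a ≤ b) (hcd : c ≤ d) :
    (a + c) * Real.log ((a + c) / (b + d)) ≤ a * Real.log (a / b) + c * Real.log (c / d) := by
  have key : ∀ p q s t : ℝ, 0 ≤ p → p ≤ q → 0 < s → s ≤ t →
      p * Real.log (s / t) ≤ p * Real.log (p / q) + (q * (s / t) - p) := by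
    intro p q s t hp hpq hs hst
    have ht := hs.trans_le hst
    rcases hp.eq_or_lt with rfl | hp
    · simp; positivity
    have hq := hp.trans_le hpq
    have hl := Real.log_le_sub_one_of_pos (x := (s / t) / (p / q)) (by positivity)
    rw [Real.log_div (by positivity) (by positivity)] at hl
    have := mul_le_mul_of_nonneg_left hl hp.le
    have e : p * (s / t / (p / q) - 1) = q * (s / t) - p := by field_simp
    rw [e] at this
    linarith
  rcases (add_nonneg ha hc).eq_or_lt with h | h
  · have h1 : a = 0 := by linarith
    have h2 : c = 0 := by linarith
    subst h1 h2; simp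
  have k1 := key a b _ _ ha hab h (add_le_add hab hcd)
  have k2 := key c d _ _ hc hcd h (add_le_add hab hcd)
  have e : b * ((a + c) / (b + d)) + d * ((a + c) / (b + d)) = a + c := by
    have : 0 < b + d := by linarith
    field_simp
  linarith

/-- Number of windows of length `l` starting in `[0,m)` that equal `u`. -/
def cnt (x : ℕ → Bool) (m l : ℕ) (u : Fin l → Bool) : ℕ :=
  ((Finset.range m).filter (fun i => (fun j : Fin l => x (i + j)) = u)).card

noncomputable def fr (x : ℕ → Bool) (m l : ℕ) (u : Fin l → Bool) : ℝ := (cnt x m l u : ℝ) / m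

noncomputable def GG (x : ℕ → Bool) (m l : ℕ) : ℝ :=
  (∑ u : Fin l → Bool, Real.negMulLog (fr x m l u)) / Real.log 2

noncomputable def DD (x : ℕ → Bool) (m l : ℕ) : ℝ :=
  (-∑ u : Fin l → Bool, ∑ a : Bool,
    fr x m (l + 1) (Fin.snoc (α := fun _ => Bool) u a) *
      Real.log (fr x m (l + 1) (Fin.snoc (α := fun _ => Bool) u a) / fr x m l u)) / Real.log 2

theorem fr_nonneg (x : ℕ → Bool) (m l : ℕ) (u : Fin l → Bool) : 0 ≤ fr x m l u := by
  unfold fr; positivity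

theorem sum_snoc {l : ℕ} (f : (Fin (l + 1) → Bool) → ℝ) :
    ∑ w, f w = ∑ u : Fin l → Bool, ∑ a : Bool, f (Fin.snoc (α := fun _ => Bool) u a) := by
  rw [← (Fin.snocEquiv (fun _ : Fin (l + 1) => Bool)).sum_comp, Fintype.sum_prod_type_right]
  rfl

theorem sum_cons {l : ℕ} (f : (Fin (l + 1) → Bool) → ℝ) :
    ∑ w, f w = ∑ u : Fin l → Bool, ∑ a : Bool, f (Fin.cons (α := fun _ => Bool) a u) := by
  rw [← (Fin.consEquiv (fun _ : Fin (l + 1) => Bool)).sum_comp, Fintype.sum_prod_type_right]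
  rfl

theorem snoc_iff {l : ℕ} (x : ℕ → Bool) (i : ℕ) (u : Fin l → Bool) (a : Bool) :
    (fun j : Fin (l + 1) => x (i + j)) = Fin.snoc (α := fun _ => Bool) u a ↔
      (fun j : Fin l => x (i + j)) = u ∧ x (i + l) = a := by
  constructor
  · intro h
    constructor
    · funext j
      have := congrFun h j.castSucc
      simpa using this
    · have := congrFun h (Fin.last l)
      simpa using this
  · rintro ⟨h1, h2⟩
    funext j
    refine Fin.lastCases ?_ (fun j => ?_) j
    · simpa using h2
    · simpa using congrFun h1 j

theorem cons_iff {l : ℕ} (x : ℕ → Bool) (i : ℕ) (u : Fin l → Bool) (a : Bool) :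
    (fun j : Fin (l + 1) => x (i + j)) = Fin.cons (α := fun _ => Bool) a u ↔
      (fun j : Fin l => x (i + j + 1)) = u ∧ x i = a := by
  constructor
  · intro h
    constructor
    · funext j
      have := congrFun h j.succ
      simpa [add_assoc] using this
    · have := congrFun h 0
      simpa using this
  · rintro ⟨h1, h2⟩
    funext j
    refine Fin.cases ?_ (fun j => ?_) j
    · simpa using h2
    · simpa [add_assoc] using congrFun h1 j

theorem card_split (s : Finset ℕ) (p : ℕ → Prop) [DecidablePred p] (g : ℕ → Bool) :
    (s.filter (fun i => p i ∧ g i = true)).card + (s.filter (fun i => p i ∧ g i = false)).card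
      = (s.filter p).card := by
  rw [← Finset.card_filter_add_card_filter_not (s := s.filter p) (fun i => g i = true),
    Finset.filter_filter, Finset.filter_filter]
  simp

theorem fr_snoc (x : ℕ → Bool) (m l : ℕ) (u : Fin l → Bool) :
    fr x m (l + 1) (Fin.snoc (α := fun _ => Bool) u true) +
      fr x m (l + 1) (Fin.snoc (α := fun _ => Bool) u false) = fr x m l u := by
  unfold fr cnt
  simp only [snoc_iff]
  rw [← add_div, ← Nat.cast_add, card_split]

theorem fr_cons (x : ℕ → Bool) (m l : ℕ) (u : Fin l → Bool) :
    fr x m (l + 1) (Fin.cons (α := fun _ => Bool) true u) +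
      fr x m (l + 1) (Fin.cons (α := fun _ => Bool) false u) = fr (fun i => x (i + 1)) m l u := by
  unfold fr cnt
  simp only [cons_iff]
  rw [← add_div, ← Nat.cast_add, card_split]

theorem fr_snoc_le (x : ℕ → Bool) (m l : ℕ) (u : Fin l → Bool) (a : Bool) :
    fr x m (l + 1) (Fin.snoc (α := fun _ => Bool) u a) ≤ fr x m l u := by
  have h := fr_snoc x m l u
  have h1 := fr_nonneg x m (l + 1) (Fin.snoc (α := fun _ => Bool) u true)
  have h2 := fr_nonneg x m (l + 1) (Fin.snoc (α := fun _ => Bool) u false)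
  cases a <;> linarith

theorem fr_zero (x : ℕ → Bool) (m : ℕ) (u : Fin 0 → Bool) : fr x m 0 u = (m : ℝ) / m := by
  unfold fr cnt
  congr 2
  rw [Finset.filter_true_of_mem, Finset.card_range]
  intro i _
  exact Subsingleton.elim _ _

theorem sum_fr_le (x : ℕ → Bool) (m l : ℕ) : ∑ u, fr x m l u ≤ 1 := by
  induction l with
  | zero =>
    simp only [fr_zero]
    simp [div_self_le_one]
  | succ l ih =>
    rw [sum_snoc]
    simpa [Fintype.sum_bool, fr_snoc] using ih

theorem GG_zero (x : ℕ → Bool) (m : ℕ) : GG x m 0 = 0 := by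
  unfold GG
  simp only [fr_zero]
  rcases eq_or_ne m 0 with rfl | h
  · simp
  · have : (m : ℝ) ≠ 0 := by exact_mod_cast h
    simp [div_self this]

theorem mul_log_div {p q : ℝ} (hp : 0 ≤ p) (hpq : p ≤ q) :
    p * Real.log (p / q) = p * Real.log p - p * Real.log q := by
  rcases hp.eq_or_lt with rfl | hp
  · simp
  · rw [Real.log_div hp.ne' (hp.trans_le hpq).ne']; ring

theorem GG_succ (x : ℕ → Bool) (m l : ℕ) : GG x m (l + 1) = GG x m l + DD x m l := by
  unfold GG DD
  rw [← add_div, sum_snoc, ← Finset.sum_neg_distrib, ← Finset.sum_add_distrib]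
  congr 1
  apply Finset.sum_congr rfl
  intro u _
  rw [Fintype.sum_bool, Fintype.sum_bool, mul_log_div (fr_nonneg _ _ _ _) (fr_snoc_le _ _ _ _ _),
    mul_log_div (fr_nonneg _ _ _ _) (fr_snoc_le _ _ _ _ _)]
  have h := fr_snoc x m l u
  unfold Real.negMulLog
  linear_combination (-Real.log (fr x m l u)) * h

theorem GG_eq_sum (x : ℕ → Bool) (m l : ℕ) : GG x m l = ∑ k ∈ Finset.range l, DD x m k := by
  induction l with
  | zero => simp [GG_zero]
  | succ l ih => rw [GG_succ, ih, Finset.sum_range_succ]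

theorem log_two_pos' : 0 < Real.log 2 := Real.log_pos (by norm_num)

theorem DD_nonneg (x : ℕ → Bool) (m l : ℕ) : 0 ≤ DD x m l := by
  unfold DD
  apply div_nonneg _ log_two_pos'.le
  rw [neg_nonneg]
  refine Finset.sum_nonpos fun u _ => Finset.sum_nonpos fun a _ => ?_
  apply mul_nonpos_of_nonneg_of_nonpos (fr_nonneg _ _ _ _)
  apply Real.log_nonpos (div_nonneg (fr_nonneg _ _ _ _) (fr_nonneg _ _ _ _))
  exact div_le_one_of_le₀ (fr_snoc_le _ _ _ _ _) (fr_nonneg _ _ _ _)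

theorem DD_le_one (x : ℕ → Bool) (m l : ℕ) : DD x m l ≤ 1 := by
  unfold DD
  rw [div_le_one log_two_pos', ← Finset.sum_neg_distrib]
  have : ∀ u : Fin l → Bool, -∑ a : Bool,
      fr x m (l + 1) (Fin.snoc (α := fun _ => Bool) u a) *
      Real.log (fr x m (l + 1) (Fin.snoc (α := fun _ => Bool) u a) / fr x m l u)
      ≤ fr x m l u * Real.log 2 := by
    intro u
    rw [Fintype.sum_bool]
    have h := log_sum_two (fr_nonneg x m (l + 1) (Fin.snoc (α := fun _ => Bool) u true))
      (fr_nonneg x m (l + 1) (Fin.snoc (α := fun _ => Bool) u false))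
      (fr_snoc_le x m l u true) (fr_snoc_le x m l u false)
    rw [fr_snoc] at h
    rcases (fr_nonneg x m l u).eq_or_lt with h0 | h0
    · rw [← h0] at h ⊢
      simp
    · have e : fr x m l u / (fr x m l u + fr x m l u) = 2⁻¹ := by field_simp; norm_num
      rw [e, Real.log_inv] at h
      linarith
  refine (Finset.sum_le_sum fun u _ => this u).trans ?_
  rw [← Finset.sum_mul]
  have := mul_le_mul_of_nonneg_right (sum_fr_le x m l) log_two_pos'.le
  linarith

theorem DD_succ_le (x : ℕ → Bool) (m l : ℕ) : DD x m (l + 1) ≤ DD (fun i => x (i + 1)) m l := by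
  unfold DD
  apply div_le_div_of_nonneg_right _ log_two_pos'.le
  rw [neg_le_neg_iff, sum_cons]
  refine Finset.sum_le_sum fun u _ => ?_
  rw [Finset.sum_comm]
  refine Finset.sum_le_sum fun a _ => ?_
  rw [Fintype.sum_bool]
  have h := log_sum_two
    (fr_nonneg x m (l + 1 + 1) (Fin.snoc (α := fun _ => Bool) (Fin.cons (α := fun _ => Bool) true u) a))
    (fr_nonneg x m (l + 1 + 1) (Fin.snoc (α := fun _ => Bool) (Fin.cons (α := fun _ => Bool) false u) a))
    (fr_snoc_le x m (l + 1) (Fin.cons (α := fun _ => Bool) true u) a)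
    (fr_snoc_le x m (l + 1) (Fin.cons (α := fun _ => Bool) false u) a)
  have e : ∀ b : Bool, Fin.snoc (α := fun _ : Fin (l + 1 + 1) => Bool)
      (Fin.cons (α := fun _ => Bool) b u : Fin (l + 1) → Bool) a
      = Fin.cons (α := fun _ => Bool) b (Fin.snoc (α := fun _ => Bool) u a : Fin (l + 1) → Bool) :=
    fun b => (Fin.cons_snoc_eq_snoc_cons (β := Bool) b u a).symm
  rw [fr_cons, e, e, fr_cons] at h
  rw [e, e]
  exact h

theorem cnt_shift (x : ℕ → Bool) (m l : ℕ) (u : Fin l → Bool) :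
    |(cnt (fun i => x (i + 1)) m l u : ℝ) - cnt x m l u| ≤ 1 := by
  have h : ∀ y : ℕ → Bool, (cnt y m l u : ℝ)
      = ∑ i ∈ Finset.range m, if (fun j : Fin l => y (i + j)) = u then (1 : ℝ) else 0 := by
    intro y; unfold cnt; simp
  rw [h, h, ← Finset.sum_sub_distrib]
  have := Finset.sum_range_sub
    (fun i => if (fun j : Fin l => x (i + j)) = u then (1 : ℝ) else 0) m
  simp only [add_right_comm _ 1 _] at this
  rw [this]
  split_ifs <;> norm_num

theorem fr_le_one (x : ℕ → Bool) (m l : ℕ) (u : Fin l → Bool) : fr x m l u ≤ 1 :=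
  (Finset.single_le_sum (f := fr x m l) (fun v _ => fr_nonneg x m l v) (Finset.mem_univ u)).trans
    (sum_fr_le x m l)

theorem GG_shift (x : ℕ → Bool) (l : ℕ) :
    Tendsto (fun m => GG (fun i => x (i + 1)) m l - GG x m l) atTop (𝓝 0) := by
  have : ∀ u : Fin l → Bool, Tendsto (fun m => Real.negMulLog (fr (fun i => x (i + 1)) m l u)
      - Real.negMulLog (fr x m l u)) atTop (𝓝 0) := by
    intro u
    have huc : UniformContinuousOn Real.negMulLog (Set.Icc 0 1) :=
      isCompact_Icc.uniformContinuousOn_of_continuous Real.continuous_negMulLog.continuousOn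
    rw [Metric.uniformContinuousOn_iff] at huc
    rw [Metric.tendsto_nhds]
    intro ε hε
    obtain ⟨δ, hδ, H⟩ := huc ε hε
    have ht : Tendsto (fun m : ℕ => (1 : ℝ) / (m : ℝ)) atTop (𝓝 0) :=
      tendsto_const_div_atTop_nhds_zero_nat _
    filter_upwards [ht.eventually_lt_const hδ] with m hm
    rw [dist_zero_right, ← dist_eq_norm]
    apply H _ ⟨fr_nonneg _ _ _ _, fr_le_one _ _ _ _⟩ _ ⟨fr_nonneg _ _ _ _, fr_le_one _ _ _ _⟩
    refine lt_of_le_of_lt ?_ hm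
    rw [Real.dist_eq]
    unfold fr
    rw [← sub_div, abs_div, Nat.abs_cast]
    exact div_le_div_of_nonneg_right (cnt_shift x m l u) (Nat.cast_nonneg _)
  have h2 := (tendsto_finsetSum Finset.univ (fun u _ => this u)).div_const (Real.log 2)
  simpa [GG, sub_div, Finset.sum_sub_distrib] using h2

theorem DD_eventually (x : ℕ → Bool) (l : ℕ) (ε : ℝ) (hε : 0 < ε) :
    ∀ᶠ m in atTop, DD x m (l + 1) ≤ DD x m l + ε := by
  have h := (GG_shift x (l + 1)).sub (GG_shift x l)
  rw [sub_zero] at h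
  filter_upwards [h.eventually_lt_const hε] with m hm
  have := DD_succ_le x m l
  rw [GG_succ, GG_succ] at hm
  linarith

theorem occ_ofFn (x : ℕ → Bool) (n l : ℕ) (u : Fin l → Bool) :
    occ x n (List.ofFn u) = cnt x (n + 1 - l) l u := by
  unfold occ cnt factor
  congr 1
  have : ∀ (k : ℕ) (hk : k = l) (i : ℕ), List.ofFn (fun j : Fin k => x (i + j)) = List.ofFn u ↔
      (fun j : Fin l => x (i + j)) = u := by
    rintro k rfl i
    exact List.ofFn_inj
  rw [List.length_ofFn]
  exact Finset.filter_congr fun i _ => this _ (by simp) i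

theorem ofFn_append {l : ℕ} (u : Fin l → Bool) (a : Bool) :
    List.ofFn u ++ [a] = List.ofFn (Fin.snoc (α := fun _ => Bool) u a) := by
  rw [List.ofFn_succ']
  simp

theorem hBlock_eq_s11 (x : ℕ → Bool) (l m : ℕ) :
    hBlock l x (m + l) = GG x (m + 1) l / l := by
  unfold hBlock GG
  have e1 : m + l + 1 - l = m + 1 := by omega
  have e2 : ((m + l : ℕ) : ℝ) - l + 1 = ((m + 1 : ℕ) : ℝ) := by push_cast; ring
  simp only [occ_ofFn, e1, e2, Real.logb, Real.negMulLog, fr]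
  simp only [mul_div_assoc', neg_mul, Finset.sum_neg_distrib, ← Finset.sum_div]
  ring

theorem condEntropy_eq (x : ℕ → Bool) (l m : ℕ) :
    condEntropy l x (m + 1 + l) = DD x (m + 1) l := by
  unfold condEntropy DD
  have e1 : m + 1 + l + 1 - (l + 1) = m + 1 := by omega
  have e3 : m + 1 + l - 1 + 1 - l = m + 1 := by omega
  have e2 : ((m + 1 + l : ℕ) : ℝ) - l = ((m + 1 : ℕ) : ℝ) := by push_cast; ring
  simp only [ofFn_append, occ_ofFn, e1, e2, e3]
  rw [neg_div, Finset.sum_div]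
  congr 1
  refine Finset.sum_congr rfl fun u _ => ?_
  rw [Finset.sum_div]
  refine Finset.sum_congr rfl fun a _ => ?_
  have h := fr_nonneg x (m + 1) (l + 1) (Fin.snoc (α := fun _ => Bool) u a)
  unfold fr at h ⊢
  rcases h.eq_or_lt with h0 | h0
  · rw [← h0]; simp
  · rw [if_pos h0, Real.logb, mul_div_assoc]

theorem tendsto_liminf_condEntropy (x : ℕ → Bool) :
    Filter.Tendsto (fun ℓ => atTop.liminf fun n => condEntropy ℓ x n) atTop
      (nhds (hLow x)) := by
  obtain ⟨c, h1, h2⟩ := abstract_limit (fun l m => DD x m l) (fun l m => DD_nonneg x m l)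
    (fun l m => DD_le_one x m l) (fun l ε hε => DD_eventually x l ε hε)
  have e1 : ∀ l, (atTop.liminf fun n => condEntropy l x n) = atTop.liminf fun m => DD x m l := by
    intro l
    rw [← liminf_nat_add (fun n => condEntropy l x n) (1 + l),
      ← liminf_nat_add (fun m => DD x m l) 1]
    simp only [← add_assoc, condEntropy_eq]
  have e2 : ∀ l : ℕ, (atTop.liminf fun n => hBlock l x n)
      = atTop.liminf fun m => (∑ k ∈ Finset.range l, DD x m k) / (l : ℝ) := by
    intro l
    rw [← liminf_nat_add (fun n => hBlock l x n) l,
      ← liminf_nat_add (fun m => (∑ k ∈ Finset.range l, DD x m k) / (l : ℝ)) 1]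
    simp only [hBlock_eq_s11, GG_eq_sum]
  have hl : hLow x = c := by
    unfold hLow
    simp only [e2]
    exact h2.liminf_eq
  rw [hl]
  simp only [e1]
  exact h1
end
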